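/- arXiv:2212.12009 — 7 statements merged into one kernel-verified Lean document; each statement's English description precedes it below -/
import Mathlib

section
/- Let Θ ⊆ ℝ with the usual order have at least three elements, let z > 0, and define v : ℝ × Θ → ℝ by v(x, θ) = −|x − θ|^z. Then v has single-crossing expectational differences (SCED), i.e., for every pair of finite-support lotteries P, Q on ℝ the function θ ↦ Σ_x P(x)·v(x,θ) − Σ_x Q(x)·v(x,θ) is single crossing, if and only if z = 2. -/
/-!
Expectational differences are, up to a positive factor, exactly the elements of
`vectorSpan ℝ (Set.range v)`. For `z = 2` the terms in `θ ^ 2` cancel in this span, which leaves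
affine functions of `θ`, and these are single crossing.

Conversely, if `v` has SCED then, at any three types `a < b < c`, no function in this span has sign
pattern `(+, -, +)`, so the span does not fill `ℝ³` and some nonzero functional vanishes on it:
`A |x - a| ^ z + B |x - b| ^ z + C |x - c| ^ z` is constant in `x` for some `(A, B, C) ≠ 0`. If
`z ∉ {0, 1, 2}`, differentiating three times far to the right gives an invertible Vandermonde system
for the coefficients; if `z = 1`, a nonzero coefficient would leave a kink.
-/

/-- A function `f : Θ → ℝ` is single crossing if `θ ↦ sgn (f θ)` is monotone
(increasing or decreasing). -/
def SingleCrossing {Θ : Type*} [PartialOrder Θ] (f : Θ → ℝ) : Prop :=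
  Monotone (fun θ => Real.sign (f θ)) ∨ Antitone (fun θ => Real.sign (f θ))

/-- Strictly single crossing: single crossing and no two ordered zeros. -/
def StrictSingleCrossing {Θ : Type*} [PartialOrder Θ] (f : Θ → ℝ) : Prop :=
  SingleCrossing f ∧ ∀ θ' θ'' : Θ, θ' < θ'' → ¬(f θ' = 0 ∧ f θ'' = 0)

/-- A subset of a partially ordered set is an interval. -/
def IsIntervalSet {Θ : Type*} [PartialOrder Θ] (S : Set Θ) : Prop :=
  ∀ θl θm θh : Θ, θl ∈ S → θh ∈ S → θl < θm → θm < θh → θm ∈ S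

/-- Single-crossing differences. -/
def SCD {A : Type*} {Θ : Type*} [PartialOrder Θ] (u : A → Θ → ℝ) : Prop :=
  ∀ a a' : A, SingleCrossing (fun θ => u a θ - u a' θ)

/-- Strict single-crossing differences. -/
def SSCD {A : Type*} {Θ : Type*} [PartialOrder Θ] (u : A → Θ → ℝ) : Prop :=
  ∀ a a' : A, a ≠ a' → StrictSingleCrossing (fun θ => u a θ - u a' θ)

/-- The choice correspondence `C_u(S, θ)`. -/
def choiceCorr {A : Type*} {Θ : Type*} (u : A → Θ → ℝ) (S : Set A) (θ : Θ) : Set A :=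
  {a ∈ S | ∀ b ∈ S, u b θ ≤ u a θ}

/-- `f₁` ratio dominates `f₂`: conditions (RD) and (RD+). -/
def RatioDominates {Θ : Type*} [PartialOrder Θ] (f₁ f₂ : Θ → ℝ) : Prop :=
  (∀ θl θh : Θ, θl < θh → f₁ θl * f₂ θh ≤ f₁ θh * f₂ θl) ∧
  (∀ θl θm θh : Θ, θl < θm → θm < θh →
    (f₁ θl * f₂ θh = f₁ θh * f₂ θl ↔
      (f₁ θl * f₂ θm = f₁ θm * f₂ θl ∧ f₁ θm * f₂ θh = f₁ θh * f₂ θm)))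

/-- `f₁` and `f₂` are ratio ordered. -/
def RatioOrdered {Θ : Type*} [PartialOrder Θ] (f₁ f₂ : Θ → ℝ) : Prop :=
  RatioDominates f₁ f₂ ∨ RatioDominates f₂ f₁

/-- `f₁` strictly ratio dominates `f₂`. -/
def StrictRatioDominates {Θ : Type*} [PartialOrder Θ] (f₁ f₂ : Θ → ℝ) : Prop :=
  ∀ θl θh : Θ, θl < θh → f₁ θl * f₂ θh < f₁ θh * f₂ θl

/-- `f₁` and `f₂` are strictly ratio ordered. -/
def StrictRatioOrdered {Θ : Type*} [PartialOrder Θ] (f₁ f₂ : Θ → ℝ) : Prop :=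
  StrictRatioDominates f₁ f₂ ∨ StrictRatioDominates f₂ f₁

/-- The environment `(A, Θ, u)` is convex. -/
def ConvexEnv {A : Type*} {Θ : Type*} (u : A → Θ → ℝ) : Prop :=
  ∀ a a' : A, ∀ lam : ℝ, 0 < lam → lam < 1 →
    ∃ a'' : A, ∀ θ : Θ, u a'' θ = lam * u a θ + (1 - lam) * u a' θ

/-- `A` is minimal with respect to `u`: no utility-indistinguishable pair. -/
def MinimalActions {A : Type*} {Θ : Type*} (u : A → Θ → ℝ) : Prop :=
  ∀ a a' : A, a ≠ a' → ∃ θ : Θ, u a θ ≠ u a' θ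

/-- `f : Z × Θ → ℝ` is linear combinations SC-preserving. -/
def LinCombSCPreserving {Z : Type*} {Θ : Type*} [PartialOrder Θ] (f : Z → Θ → ℝ) : Prop :=
  ∀ μ : Z → ℝ, (Function.support μ).Finite →
    SingleCrossing (fun θ => ∑ᶠ z, μ z * f z θ)

/-- `f : Z × Θ → ℝ` is linear combinations SSC-preserving. -/
def LinCombSSCPreserving {Z : Type*} {Θ : Type*} [PartialOrder Θ] (f : Z → Θ → ℝ) : Prop :=
  ∀ μ : Z → ℝ, (Function.support μ).Finite →
    ((∀ θ : Θ, (∑ᶠ z, μ z * f z θ) = 0) ∨ StrictSingleCrossing (fun θ => ∑ᶠ z, μ z * f z θ))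

/-- `f : Z × Θ → ℝ` is linear combinations monotonicity-preserving. -/
def LinCombMonPreserving {Z : Type*} {Θ : Type*} [PartialOrder Θ] (f : Z → Θ → ℝ) : Prop :=
  ∀ μ : Z → ℝ, (Function.support μ).Finite →
    (Monotone (fun θ => ∑ᶠ z, μ z * f z θ) ∨ Antitone (fun θ => ∑ᶠ z, μ z * f z θ))

/-- A finite-support lottery on `X`. -/
def IsLottery {X : Type*} (P : X → ℝ) : Prop :=
  (∀ x, 0 ≤ P x) ∧ (Function.support P).Finite ∧ (∑ᶠ x, P x) = 1

/-- Single-crossing expectational differences. -/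
def SCED {X : Type*} {Θ : Type*} [PartialOrder Θ] (v : X → Θ → ℝ) : Prop :=
  ∀ P Q : X → ℝ, IsLottery P → IsLottery Q →
    SingleCrossing (fun θ => (∑ᶠ x, P x * v x θ) - ∑ᶠ x, Q x * v x θ)

section SingleCrossing

theorem monotone_realSign : Monotone Real.sign := by
  intro x y hxy
  unfold Real.sign
  split_ifs <;> linarith

variable {Θ : Type*} [PartialOrder Θ] {f : Θ → ℝ}

namespace SingleCrossing

theorem of_monotone (hf : Monotone f) : SingleCrossing f :=
  .inl (monotone_realSign.comp hf)

theorem of_antitone (hf : Antitone f) : SingleCrossing f :=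
  .inr (monotone_realSign.comp_antitone hf)

theorem const_add_const_mul_of_monotone (hf : Monotone f) (α β : ℝ) :
    SingleCrossing (fun θ => α + β * f θ) := by
  rcases le_total 0 β with hβ | hβ
  · exact of_monotone ((hf.const_mul hβ).const_add α)
  · exact of_antitone ((hf.const_mul_of_nonpos hβ).const_add α)

theorem const_mul_iff {t : ℝ} (ht : 0 < t) :
    SingleCrossing (fun θ => t * f θ) ↔ SingleCrossing f := by
  have hsign (y : ℝ) : Real.sign (t * y) = Real.sign y := by
    simp only [Real.sign, ← smul_eq_mul, smul_neg_iff_of_pos_left ht, smul_pos_iff_of_pos_left ht]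
  simp only [SingleCrossing, hsign]

theorem not_of_pos_neg_pos {a b c : Θ} (hab : a ≤ b) (hbc : b ≤ c) (ha : 0 < f a) (hb : f b < 0)
    (hc : 0 < f c) : ¬SingleCrossing f := by
  rintro (h | h)
  · have := h hab
    norm_num [Real.sign_of_pos ha, Real.sign_of_neg hb] at this
  · have := h hbc
    norm_num [Real.sign_of_pos hc, Real.sign_of_neg hb] at this

end SingleCrossing

end SingleCrossing

section ExpectationalDifferences

variable {X Θ : Type*}

theorem IsLottery.expectation_mem_affineSpan {P : X → ℝ} (hP : IsLottery P) (v : X → Θ → ℝ) :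
    (fun θ => ∑ᶠ x, P x * v x θ) ∈ affineSpan ℝ (Set.range v) := by
  obtain ⟨-, hfin, hsum⟩ := hP
  rw [finsum_eq_sum P hfin] at hsum
  convert affineCombination_mem_affineSpan hsum v using 1
  rw [Finset.affineCombination_eq_linear_combination _ _ _ hsum]
  ext θ
  simp only [Finset.sum_apply, Pi.smul_apply, smul_eq_mul]
  exact finsum_eq_sum_of_support_subset _
    ((Function.support_mul_subset_left P _).trans hfin.coe_toFinset.ge)

theorem exists_isLottery_expectation_eq_sum_div {s : Finset X} {w : X → ℝ}
    (hw : ∀ x ∈ s, 0 ≤ w x) (hpos : 0 < ∑ x ∈ s, w x) :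
    ∃ P, IsLottery P ∧ ∀ g : X → ℝ, ∑ᶠ x, P x * g x = (∑ x ∈ s, w x * g x) / ∑ x ∈ s, w x := by
  set P := (s : Set X).indicator fun x => w x / ∑ x ∈ s, w x with hP
  have expectation_eq (g : X → ℝ) :
      ∑ᶠ x, P x * g x = (∑ x ∈ s, w x * g x) / ∑ x ∈ s, w x := by
    simp only [hP, ← Set.indicator_mul_left, ← finsum_mem_def, finsum_mem_coe_finset,
      Finset.sum_div, div_mul_eq_mul_div]
  refine ⟨P, ⟨Set.indicator_nonneg fun x hx => div_nonneg (hw x hx) hpos.le,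
    s.finite_toSet.subset Set.support_indicator_subset, ?_⟩, expectation_eq⟩
  simpa only [Pi.one_apply, mul_one, div_self hpos.ne'] using expectation_eq 1

/-- The lotteries are the normalized positive and negative parts of `w`. -/
theorem exists_isLottery_sub_expectation_eq {s : Finset X} {w : X → ℝ} (hw : ∑ x ∈ s, w x = 0)
    (hne : ∃ x ∈ s, w x ≠ 0) :
    ∃ t > 0, ∃ P Q, IsLottery P ∧ IsLottery Q ∧
      ∀ g : X → ℝ, ∑ x ∈ s, w x * g x = t * (∑ᶠ x, P x * g x - ∑ᶠ x, Q x * g x) := by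
  have hparts : ∑ x ∈ s, (w x)⁻ = ∑ x ∈ s, (w x)⁺ := by
    rw [eq_comm, ← sub_eq_zero, ← Finset.sum_sub_distrib]
    simpa only [posPart_sub_negPart] using hw
  have hpos : 0 < ∑ x ∈ s, (w x)⁺ := by
    obtain ⟨x, hx, hwx⟩ := Finset.exists_pos_of_sum_zero_of_exists_nonzero w hw hne
    exact Finset.sum_pos' (fun _ _ => posPart_nonneg _) ⟨x, hx, posPart_pos hwx⟩
  obtain ⟨P, hP, hPw⟩ := exists_isLottery_expectation_eq_sum_div
    (fun x _ => posPart_nonneg (w x)) hpos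
  obtain ⟨Q, hQ, hQw⟩ := exists_isLottery_expectation_eq_sum_div
    (fun x _ => negPart_nonneg (w x)) (hparts ▸ hpos)
  refine ⟨_, hpos, P, Q, hP, hQ, fun g => ?_⟩
  rw [hPw, hQw, hparts, ← sub_div, mul_div_cancel₀ _ hpos.ne', ← Finset.sum_sub_distrib]
  simp only [← sub_mul, posPart_sub_negPart]

variable [PartialOrder Θ] {v : X → Θ → ℝ}

theorem sced_iff_forall_mem_vectorSpan :
    SCED v ↔ ∀ f ∈ vectorSpan ℝ (Set.range v), SingleCrossing f := by
  refine ⟨fun hv f hf => ?_, fun h P Q hP hQ => h _ ?_⟩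
  · obtain ⟨s, w, hw, rfl⟩ := (mem_vectorSpan_iff_eq_weightedVSub ℝ).1 hf
    rw [Finset.weightedVSub_eq_linear_combination s hw]
    by_cases hne : ∃ x ∈ s, w x ≠ 0
    · obtain ⟨t, ht, P, Q, hP, hQ, hPQ⟩ := exists_isLottery_sub_expectation_eq hw hne
      have hfun : ∑ x ∈ s, w x • v x =
          fun θ => t * (∑ᶠ x, P x * v x θ - ∑ᶠ x, Q x * v x θ) := by
        ext θ
        simpa only [Finset.sum_apply, Pi.smul_apply, smul_eq_mul] using hPQ fun x => v x θ
      rw [hfun, SingleCrossing.const_mul_iff ht]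
      exact hv P Q hP hQ
    · push Not at hne
      rw [Finset.sum_eq_zero fun x hx => by rw [hne x hx, zero_smul]]
      exact .of_monotone monotone_const
  · rw [← direction_affineSpan]
    exact AffineSubspace.vsub_mem_direction (hP.expectation_mem_affineSpan v)
      (hQ.expectation_mem_affineSpan v)

theorem SCED.exists_ne_zero_forall_dotProduct_eq (hv : SCED v) {θ : Fin 3 → Θ} (hθ : Monotone θ) :
    ∃ A : Fin 3 → ℝ, A ≠ 0 ∧ ∀ x y, A ⬝ᵥ (v x ∘ θ) = A ⬝ᵥ (v y ∘ θ) := by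
  let W := (vectorSpan ℝ (Set.range v)).map (LinearMap.funLeft ℝ ℝ θ)
  have hnotMem : ![1, -1, 1] ∉ W := by
    rintro ⟨f, hf, hfθ⟩
    have hval (i : Fin 3) : f (θ i) = ![1, -1, 1] i := congrFun hfθ i
    refine SingleCrossing.not_of_pos_neg_pos (hθ (zero_le_one : (0 : Fin 3) ≤ 1))
      (hθ (by decide : (1 : Fin 3) ≤ 2)) ?_ ?_ ?_ (sced_iff_forall_mem_vectorSpan.1 hv f hf) <;>
    simp [hval]
  have hlt : W < ⊤ := lt_top_iff_ne_top.2 fun h => hnotMem (h ▸ Submodule.mem_top)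
  obtain ⟨φ, hφ, hker⟩ := W.exists_le_ker_of_lt_top hlt
  obtain ⟨A, rfl⟩ := (dotProductEquiv ℝ (Fin 3)).surjective φ
  refine ⟨A, fun hA => hφ (by rw [hA, map_zero]), fun x y => ?_⟩
  rw [← sub_eq_zero, ← dotProduct_sub]
  exact hker (Submodule.mem_map_of_mem
    (vsub_mem_vectorSpan ℝ (Set.mem_range_self x) (Set.mem_range_self y)))

end ExpectationalDifferences

section TranslatedPowers

open Filter Topology

theorem eventually_sum_mul_sub_rpow_sub_one_eq_zero {ι : Type*} [Fintype ι] {A a : ι → ℝ}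
    {p K : ℝ} (hp : p ≠ 0) (h : ∀ᶠ x in atTop, ∑ i, A i * (x - a i) ^ p = K) :
    ∀ᶠ x in atTop, ∑ i, A i * (x - a i) ^ (p - 1) = 0 := by
  obtain ⟨c, hc⟩ := eventually_atTop.1 h
  filter_upwards [eventually_gt_atTop c, eventually_all.2 fun i => eventually_gt_atTop (a i)]
    with x hcx hax
  have hderiv : HasDerivAt (fun y => ∑ i, A i * (y - a i) ^ p)
      (∑ i, A i * (1 * p * (x - a i) ^ (p - 1))) x :=
    .fun_sum fun i _ =>
      (((hasDerivAt_id x).sub_const (a i)).rpow_const (.inl (sub_pos.2 (hax i)).ne')).const_mul _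
  have hconst : (fun y => ∑ i, A i * (y - a i) ^ p) =ᶠ[𝓝 x] fun _ => K := by
    filter_upwards [lt_mem_nhds hcx] with y hy using hc y hy.le
  have hzero := hderiv.unique ((hasDerivAt_const x K).congr_of_eventuallyEq hconst)
  simp only [one_mul, mul_left_comm _ p, ← Finset.mul_sum] at hzero
  exact (mul_eq_zero.1 hzero).resolve_left hp

theorem eventually_sum_mul_sub_rpow_sub_succ_eq_zero {ι : Type*} [Fintype ι] {A a : ι → ℝ}
    {p K : ℝ} (h : ∀ᶠ x in atTop, ∑ i, A i * (x - a i) ^ p = K) (k : ℕ)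
    (hp : ∀ j : ℕ, j ≤ k → p ≠ j) :
    ∀ᶠ x in atTop, ∑ i, A i * (x - a i) ^ (p - (k + 1 : ℕ)) = 0 := by
  induction k with
  | zero =>
    simpa using eventually_sum_mul_sub_rpow_sub_one_eq_zero (by simpa using hp 0 le_rfl) h
  | succ k ih =>
    rw [Nat.cast_succ, ← sub_sub]
    exact eventually_sum_mul_sub_rpow_sub_one_eq_zero (sub_ne_zero.2 (hp _ le_rfl))
      (ih fun j hj => hp j (hj.trans k.le_succ))

theorem eq_zero_of_eventually_sum_mul_sub_rpow_eq {n : ℕ} {A a : Fin n → ℝ}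
    (ha : Function.Injective a) {p K : ℝ} (hp : ∀ j : ℕ, j < n → p ≠ j)
    (h : ∀ᶠ x in atTop, ∑ i, A i * (x - a i) ^ p = K) : A = 0 := by
  have hderivs : ∀ᶠ x in atTop, ∀ k : Fin n, ∑ i, A i * (x - a i) ^ (p - (k + 1 : ℕ)) = 0 :=
    eventually_all.2 fun k => eventually_sum_mul_sub_rpow_sub_succ_eq_zero h k
      fun j hj => hp j (hj.trans_lt k.isLt)
  obtain ⟨x, hx, hax⟩ :=
    (hderivs.and (eventually_all.2 fun i => eventually_gt_atTop (a i))).exists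
  have hvandermonde : (fun i => A i * (x - a i) ^ (p - n)) = 0 := by
    refine Matrix.eq_zero_of_forall_pow_sum_mul_pow_eq_zero
      (sub_right_injective.comp ha : Function.Injective fun i => x - a i) fun j => ?_
    rw [← hx j.rev]
    refine Finset.sum_congr rfl fun i _ => ?_
    have hindex : ((j.rev + 1 : ℕ) : ℝ) + (j : ℕ) = n := by
      norm_cast
      rw [Fin.val_rev]
      omega
    have hexp : p - (j.rev + 1 : ℕ) = p - n + (j : ℕ) := by linear_combination -hindex
    rw [hexp, Real.rpow_add_natCast (sub_pos.2 (hax i)).ne', ← mul_assoc, Function.comp_apply]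
  ext i
  exact (mul_eq_zero.1 (congrFun hvandermonde i)).resolve_right
    (Real.rpow_pos_of_pos (sub_pos.2 (hax i)) _).ne'

theorem eq_zero_of_sum_mul_abs_sub_eq {ι : Type*} [Fintype ι] {A a : ι → ℝ}
    (ha : Function.Injective a) {K : ℝ} (h : ∀ x, ∑ i, A i * |x - a i| = K) : A = 0 := by
  classical
  ext j
  by_contra hj
  have hothers : DifferentiableAt ℝ (fun x => ∑ i ∈ Finset.univ.erase j, A i * |x - a i|) (a j) :=
    .fun_sum fun i hi => ((differentiableAt_id.sub_const (a i)).abs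
      (sub_ne_zero.2 (ha.ne (Finset.ne_of_mem_erase hi).symm))).const_mul _
  have hterm (x : ℝ) :
      (A j)⁻¹ * (K - ∑ i ∈ Finset.univ.erase j, A i * |x - a i|) = |x - a j| := by
    rw [← h x, ← Finset.add_sum_erase _ _ (Finset.mem_univ j), add_sub_cancel_right,
      inv_mul_cancel_left₀ hj]
  have hkink : DifferentiableAt ℝ (fun x => |x - a j|) (a j) := by
    simpa only [hterm] using (hothers.const_sub K).const_mul (A j)⁻¹
  apply not_differentiableAt_abs_zero
  simpa only [differentiableAt_comp_sub_const, sub_self] using hkink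

theorem eq_zero_of_sum_mul_abs_sub_rpow_eq {A a : Fin 3 → ℝ} (ha : Function.Injective a)
    {z K : ℝ} (hz0 : z ≠ 0) (hz2 : z ≠ 2) (h : ∀ x, ∑ i, A i * |x - a i| ^ z = K) : A = 0 := by
  rcases eq_or_ne z 1 with rfl | hz1
  · exact eq_zero_of_sum_mul_abs_sub_eq ha (by simpa only [Real.rpow_one] using h)
  · refine eq_zero_of_eventually_sum_mul_sub_rpow_eq (p := z) (K := K) ha ?_ ?_
    · intro j hj
      interval_cases j <;> assumption_mod_cast
    · filter_upwards [eventually_all.2 fun i => eventually_gt_atTop (a i)] with x hx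
      simpa only [fun i => abs_of_pos (sub_pos.2 (hx i))] using h x

end TranslatedPowers

theorem sced_neg_abs_sub_rpow_two (Θ : Set ℝ) :
    SCED (fun (x : ℝ) (θ : Θ) => -(|x - (θ : ℝ)| ^ (2 : ℝ))) := by
  rw [sced_iff_forall_mem_vectorSpan]
  intro f hf
  have haffine : f ∈ Submodule.span ℝ {fun _ : Θ => (1 : ℝ), fun θ : Θ => (θ : ℝ)} := by
    refine Submodule.span_le.2 ?_ hf
    rintro _ ⟨_, ⟨x, rfl⟩, _, ⟨y, rfl⟩, rfl⟩
    refine Submodule.mem_span_pair.2 ⟨y ^ 2 - x ^ 2, 2 * (x - y), ?_⟩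
    ext θ
    simp only [Pi.add_apply, Pi.smul_apply, smul_eq_mul, vsub_eq_sub, Pi.sub_apply, Real.rpow_two,
      sq_abs]
    ring
  obtain ⟨α, β, rfl⟩ := Submodule.mem_span_pair.1 haffine
  convert SingleCrossing.const_add_const_mul_of_monotone (Subtype.mono_coe (· ∈ Θ)) α β using 2
  simp

/-- With `Θ ⊆ ℝ` having at least three elements, the power loss
function `v(x,θ) = -|x - θ|^z` has SCED iff `z = 2`. -/
theorem powerLoss_sced_iff_quadratic (Θ : Set ℝ)
    (hthree : ∃ θ₁ θ₂ θ₃ : ℝ, θ₁ ∈ Θ ∧ θ₂ ∈ Θ ∧ θ₃ ∈ Θ ∧ θ₁ ≠ θ₂ ∧ θ₁ ≠ θ₃ ∧ θ₂ ≠ θ₃)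
    (z : ℝ) (hz : 0 < z) :
    SCED (fun (x : ℝ) (θ : Θ) => -(|x - (θ : ℝ)| ^ z)) ↔ z = 2 := by
  refine ⟨fun hv => ?_, ?_⟩
  · by_contra hz2
    obtain ⟨θ₁, θ₂, θ₃, h₁, h₂, h₃, h₁₂, h₁₃, h₂₃⟩ := hthree
    have hcard : ({⟨θ₁, h₁⟩, ⟨θ₂, h₂⟩, ⟨θ₃, h₃⟩} : Finset Θ).card = 3 := by
      simp [h₁₂, h₁₃, h₂₃]
    let θ : Fin 3 ↪o Θ := Finset.orderEmbOfFin _ hcard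
    obtain ⟨A, hA, hconst⟩ := hv.exists_ne_zero_forall_dotProduct_eq θ.monotone
    have hsum (x : ℝ) : ∑ i, A i * |x - θ i| ^ z = ∑ i, A i * |0 - (θ i : ℝ)| ^ z := by
      simpa [dotProduct] using hconst x 0
    exact hA (eq_zero_of_sum_mul_abs_sub_rpow_eq (Subtype.val_injective.comp θ.injective)
      hz.ne' hz2 hsum)
  · rintro rfl
    exact sced_neg_abs_sub_rpow_two Θ
end

section
/- Let Θ ⊆ ℝ contain three elements θ_l < θ_m < θ_h, and let z > 0. If there exist functions g₁, g₂ : ℝ → ℝ and f₁, f₂, h : Θ → ℝ such that −|x − θ|^z = g₁(x)·f₁(θ) + g₂(x)·f₂(θ) + h(θ) for all x ∈ ℝ and θ ∈ Θ, then z = 2. -/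
open Filter Topology Polynomial

theorem exists_eq_pow_of_analyticAt_of_map_mul {𝕜 E : Type*} [NontriviallyNormedField 𝕜]
    [NormedAddCommGroup E] [NormedSpace 𝕜 E] {f : 𝕜 → E} {χ : 𝕜 → 𝕜} (hf : AnalyticAt 𝕜 f 0)
    (hf₀ : ¬∀ᶠ x in 𝓝 0, f x = 0) (hχ : ∀ a x, f (a * x) = χ a • f x) :
    ∃ m : ℕ, ∀ a, χ a = a ^ m := by
  obtain ⟨m, g, hg, hg₀, hfg⟩ := hf.exists_eventuallyEq_pow_smul_nonzero_iff.2 hf₀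
  simp only [sub_zero] at hfg
  refine ⟨m, fun a ↦ ?_⟩
  have hscale : Tendsto (fun x ↦ a * x) (𝓝 0) (𝓝 0) := by
    simpa using (continuous_const_mul a).tendsto 0
  have hfactor : ∀ᶠ x in 𝓝[≠] 0, χ a • g x = a ^ m • g (a * x) := by
    filter_upwards [hfg.filter_mono nhdsWithin_le_nhds,
      (hscale.eventually hfg).filter_mono nhdsWithin_le_nhds, self_mem_nhdsWithin]
      with x hx hax hx₀
    apply smul_right_injective E (pow_ne_zero m hx₀)
    calc x ^ m • χ a • g x = χ a • f x := by rw [smul_comm, hx]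
      _ = x ^ m • a ^ m • g (a * x) := by rw [← hχ, hax, mul_pow, mul_comm, mul_smul]
  have hlim : χ a • g 0 = a ^ m • g 0 :=
    tendsto_nhds_unique_of_eventuallyEq
      ((hg.continuousAt.tendsto.const_smul (χ a)).mono_left nhdsWithin_le_nhds)
      (((hg.continuousAt.tendsto.comp hscale).const_smul (a ^ m)).mono_left nhdsWithin_le_nhds)
      hfactor
  exact smul_left_injective 𝕜 hg₀ hlim

theorem exists_abs_rpow_eq_pow_of_analyticAt {z : ℝ} (hz : AnalyticAt ℝ (fun x : ℝ ↦ |x| ^ z) 0) :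
    ∃ m : ℕ, ∀ x : ℝ, |x| ^ z = x ^ m := by
  refine exists_eq_pow_of_analyticAt_of_map_mul hz (fun hzero ↦ ?_) fun a x ↦ ?_
  · obtain ⟨x, hx, hx₀⟩ :=
      ((hzero.filter_mono nhdsWithin_le_nhds).and (self_mem_nhdsWithin (s := {0}ᶜ))).exists
    exact (Real.rpow_pos_of_pos (abs_pos.2 hx₀) z).ne' hx
  · rw [abs_mul, Real.mul_rpow (abs_nonneg a) (abs_nonneg x), smul_eq_mul]

theorem even_and_eq_of_abs_rpow_eq_pow {z : ℝ} {m : ℕ} (h : ∀ x : ℝ, |x| ^ z = x ^ m) :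
    Even m ∧ z = m := by
  constructor
  · have hneg : (-1 : ℝ) ^ m = 1 := by simpa using (h (-1)).symm
    exact (neg_one_pow_eq_one_iff_even (by norm_num)).1 hneg
  · have htwo : (2 : ℝ) ^ z = 2 ^ (m : ℝ) := by simpa using h 2
    exact (Real.rpow_right_inj two_pos (by norm_num)).1 htwo

theorem analyticAt_norm_sub_rpow {E : Type*} [NormedAddCommGroup E] [InnerProductSpace ℝ E]
    {t x : E} (z : ℝ) (hx : x ≠ t) : AnalyticAt ℝ (fun y ↦ ‖y - t‖ ^ z) x :=
  (((contDiffAt_id.sub contDiffAt_const).norm ℝ (sub_ne_zero.2 hx)).rpow_const_of_ne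
    (norm_ne_zero_iff.2 (sub_ne_zero.2 hx))).analyticAt

theorem analyticAt_norm_rpow_of_sum {E ι : Type*} [NormedAddCommGroup E] [InnerProductSpace ℝ E]
    [Fintype ι] {t : ι → E} {c : ι → ℝ} {z : ℝ} {j : ι} (ht : Function.Injective t)
    (hcj : c j ≠ 0) (hsum : AnalyticAt ℝ (fun x ↦ ∑ i, c i * ‖x - t i‖ ^ z) (t j)) :
    AnalyticAt ℝ (fun x : E ↦ ‖x‖ ^ z) 0 := by
  classical
  have hrest : AnalyticAt ℝ (fun x ↦ ∑ i ∈ Finset.univ.erase j, c i * ‖x - t i‖ ^ z) (t j) :=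
    Finset.analyticAt_fun_sum _ fun i hi ↦
      analyticAt_const.mul (analyticAt_norm_sub_rpow z (ht.ne (Finset.ne_of_mem_erase hi).symm))
  have hj : AnalyticAt ℝ (fun x ↦ ‖x - t j‖ ^ z) (t j) := by
    refine ((analyticAt_const (v := (c j)⁻¹)).mul (hsum.sub hrest)).congr (.of_forall fun x ↦ ?_)
    have hsplit := Finset.add_sum_erase _ (fun i ↦ c i * ‖x - t i‖ ^ z) (Finset.mem_univ j)
    simp only [Pi.mul_apply, Pi.sub_apply, ← hsplit, add_sub_cancel_right, inv_mul_cancel_left₀ hcj]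
  have hshift : AnalyticAt ℝ (fun x ↦ x + t j) 0 := analyticAt_id.add analyticAt_const
  simpa only [Function.comp_def, add_sub_cancel_right] using hj.comp_of_eq hshift (zero_add _)

theorem eq_zero_of_sum_mul_sub_pow_eq_const {R : Type*} [CommRing R] [IsDomain R] [CharZero R]
    {n m : ℕ} (hnm : n ≤ m) {t c : Fin n → R} (ht : Function.Injective t) {k : R}
    (hconst : ∀ x, ∑ i, c i * (x - t i) ^ m = k) : c = 0 := by
  have hpoly : ∑ i, C (c i) * (X + C (-t i)) ^ m = C k :=
    Polynomial.funext fun x ↦ by simpa [eval_finsetSum, ← sub_eq_add_neg] using hconst x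
  refine Matrix.eq_zero_of_forall_pow_sum_mul_pow_eq_zero (neg_injective.comp ht) fun j ↦ ?_
  have hjm : (j : ℕ) < m := j.isLt.trans_le hnm
  have hcoeff : (∑ i, c i * (-t i) ^ (j : ℕ)) * m.choose (m - j) = 0 := by
    have := congrArg (coeff · (m - j)) hpoly
    simpa only [finsetSum_coeff, coeff_C_mul, coeff_X_add_C_pow, Nat.sub_sub_self hjm.le,
      coeff_C_of_ne_zero (Nat.sub_pos_of_lt hjm).ne', ← mul_assoc, ← Finset.sum_mul] using this
  exact (mul_eq_zero.1 hcoeff).resolve_right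
    (Nat.cast_ne_zero.2 (Nat.choose_pos (Nat.sub_le _ _)).ne')

theorem exists_ne_zero_forall_sum_mul_eq_of_separable {R X ι σ : Type*} [CommRing R]
    [Nontrivial R] [Fintype ι] [Fintype σ] (hcard : Fintype.card σ < Fintype.card ι)
    {φ : X → ι → R} {g : σ → X → R} {f : σ → ι → R} {h : ι → R}
    (hφ : ∀ x i, φ x i = ∑ s, g s x * f s i + h i) :
    ∃ c : ι → R, c ≠ 0 ∧ ∀ x, ∑ i, c i * φ x i = ∑ i, c i * h i := by
  have hdep : ¬LinearIndependent R fun i s ↦ f s i := fun hindep ↦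
    hcard.not_ge (by simpa using hindep.fintype_card_le_finrank)
  obtain ⟨c, hc, j, hcj⟩ := Fintype.not_linearIndependent_iff.1 hdep
  have hann (s : σ) : ∑ i, c i * f s i = 0 := by simpa [Finset.sum_apply] using congrFun hc s
  refine ⟨c, Function.ne_iff.2 ⟨j, hcj⟩, fun x ↦ ?_⟩
  calc ∑ i, c i * φ x i
      = ∑ s, g s x * ∑ i, c i * f s i + ∑ i, c i * h i := by
        simp only [hφ, mul_add, Finset.sum_add_distrib, Finset.mul_sum, mul_left_comm (g _ x)]
        rw [Finset.sum_comm]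
    _ = ∑ i, c i * h i := by simp only [hann, mul_zero, Finset.sum_const_zero, zero_add]

theorem powerLoss_separable_form_implies_quadratic_general {Θ : Set ℝ} {n : ℕ}
    {t : Fin (n + 1) → Θ} (ht : Function.Injective t) {z : ℝ}
    {g : Fin n → ℝ → ℝ} {f : Fin n → Θ → ℝ} {h : Θ → ℝ}
    (hsep : ∀ (x : ℝ) (θ : Θ), -(|x - (θ : ℝ)| ^ z) = ∑ s, g s x * f s θ + h θ) :
    ∃ m : ℕ, Even m ∧ m ≤ n ∧ z = m := by
  have htinj := Subtype.val_injective.comp ht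
  obtain ⟨c, hc, hsum⟩ := exists_ne_zero_forall_sum_mul_eq_of_separable
    (by simp only [Fintype.card_fin, n.lt_succ_self]) fun x i ↦ hsep x (t i)
  obtain ⟨j, hcj⟩ := Function.ne_iff.1 hc
  have hconst (x : ℝ) : ∑ i, c i * |x - t i| ^ z = -∑ i, c i * h (t i) := by
    simp only [← hsum x, mul_neg, Finset.sum_neg_distrib, neg_neg]
  obtain ⟨m, hm⟩ := exists_abs_rpow_eq_pow_of_analyticAt <|
    analyticAt_norm_rpow_of_sum htinj hcj <|
      analyticAt_const.congr (.of_forall fun x ↦ (hconst x).symm)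
  obtain ⟨heven, hzm⟩ := even_and_eq_of_abs_rpow_eq_pow hm
  simp only [hm] at hconst
  exact ⟨m, heven,
    not_lt.1 fun hnm ↦ hc (eq_zero_of_sum_mul_sub_pow_eq_const hnm htinj hconst), hzm⟩

/-- If the power loss function has the two-statistic separable
form on a `Θ ⊆ ℝ` containing three ordered elements, then `z = 2`. -/
theorem powerLoss_separable_form_implies_quadratic (Θ : Set ℝ)
    (θl θm θh : ℝ) (meml : θl ∈ Θ) (memm : θm ∈ Θ) (memh : θh ∈ Θ)
    (hlm : θl < θm) (hmh : θm < θh)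
    (z : ℝ) (hz : 0 < z)
    (g₁ g₂ : ℝ → ℝ) (f₁ f₂ h : Θ → ℝ)
    (heq : ∀ (x : ℝ) (θ : Θ), -(|x - (θ : ℝ)| ^ z) = g₁ x * f₁ θ + g₂ x * f₂ θ + h θ) :
    z = 2 := by
  obtain ⟨m, ⟨k, rfl⟩, hle, rfl⟩ := powerLoss_separable_form_implies_quadratic_general
    (t := ![⟨θl, meml⟩, ⟨θm, memm⟩, ⟨θh, memh⟩]) (g := ![g₁, g₂]) (f := ![f₁, f₂])
    (StrictMono.injective (by simp [hlm, hmh])) (by simpa [Fin.sum_univ_two] using heq)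
  norm_cast at hz ⊢
  lia
end

section
/- Let Θ be a partially ordered set in which every pair of elements has an upper bound and a lower bound in Θ. Let n ∈ ℕ, let A₁, …, A_n be sets with A = A₁ × … × A_n, let g_i : A_i → ℝ have convex range (the image of g_i is a convex subset of ℝ) for each i, let f_i : Θ → ℝ for each i, and define u : A × Θ → ℝ by u(a, θ) = Σ_{i=1}^n g_i(a_i)·f_i(θ). Then u has single-crossing differences (SCD) if and only if there exist vectors λ^I, λ^{II} ∈ ℝⁿ, a function h : Θ → ℝ, and functions f^I, f^{II} : Θ → ℝ that are each single crossing and ratio ordered, such that u(a, θ) = (Σ_{i=1}^n λ^I_i·g_i(a_i))·f^I(θ) + (Σ_{i=1}^n λ^{II}_i·g_i(a_i))·f^{II}(θ) + h(θ) for all a ∈ A and θ ∈ Θ. -/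
open Module Submodule

section Preliminaries

open scoped Pointwise

theorem monotone_or_antitone_of_forall_le_le {α β : Type*} [Preorder α] [IsDirectedOrder α]
    [IsCodirectedOrder α] [LinearOrder β] {s : α → β}
    (hpeak : ∀ ⦃a b c⦄, a ≤ b → b ≤ c → ¬(s a < s b ∧ s c < s b))
    (hvalley : ∀ ⦃a b c⦄, a ≤ b → b ≤ c → ¬(s b < s a ∧ s b < s c)) :
    Monotone s ∨ Antitone s := by
  by_contra! h
  simp only [Monotone, Antitone, not_forall, not_le] at h
  obtain ⟨⟨a, b, hab, hdec⟩, c, d, hcd, hinc⟩ := h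
  obtain ⟨p, hpa, hpc⟩ := exists_le_le a c
  obtain ⟨q, hbq, hdq⟩ := exists_ge_ge b d
  have hap : s a ≤ s p := not_lt.1 fun h ↦ hpeak hpa hab ⟨h, hdec⟩
  have hqb : s q ≤ s b := not_lt.1 fun h ↦ hvalley hab hbq ⟨hdec, h⟩
  have hpc : s p ≤ s c := not_lt.1 fun h ↦ hvalley hpc hcd ⟨h, hinc⟩
  have hdq : s d ≤ s q := not_lt.1 fun h ↦ hpeak hcd hdq ⟨hinc, h⟩
  exact lt_irrefl (s a) <|
    calc s a ≤ s c := hap.trans hpc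
      _ < s d := hinc
      _ ≤ s b := hdq.trans hqb
      _ < s a := hdec

theorem ker_eq_of_ker_le_of_finrank_range_le {K V V₁ V₂ : Type*} [DivisionRing K]
    [AddCommGroup V] [Module K V] [AddCommGroup V₁] [Module K V₁] [FiniteDimensional K V₁]
    [AddCommGroup V₂] [Module K V₂] {f : V →ₗ[K] V₁} {g : V →ₗ[K] V₂}
    (hker : f.ker ≤ g.ker) (hrank : finrank K f.range ≤ finrank K g.range) : f.ker = g.ker := by
  have := Module.Finite.equiv f.quotKerEquivRange.symm
  have := Module.Finite.of_surjective (factor hker) (factor_surjective hker)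
  rw [← f.quotKerEquivRange.finrank_eq, ← g.quotKerEquivRange.finrank_eq] at hrank
  have hinj := (OrzechProperty.bijective_of_surjective_of_finrank_le (factor hker)
    (factor_surjective hker) hrank).injective
  refine le_antisymm hker fun x hx ↦ (Quotient.mk_eq_zero _).1 (hinj ?_)
  rw [map_zero]
  exact (Quotient.mk_eq_zero _).2 hx

theorem exists_nonneg_mem_smul_sub_of_mem_vectorSpan {𝕜 E : Type*} [Field 𝕜] [LinearOrder 𝕜]
    [IsStrictOrderedRing 𝕜] [AddCommGroup E] [Module 𝕜 E] {s : Set E} (hs : Convex 𝕜 s)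
    (hne : s.Nonempty) {v : E} (hv : v ∈ vectorSpan 𝕜 s) : ∃ r : 𝕜, 0 ≤ r ∧ v ∈ r • (s - s) := by
  induction hv using span_induction with
  | mem v hv => exact ⟨1, zero_le_one, by rw [one_smul]; exact hv⟩
  | zero => exact ⟨0, le_rfl, by simp [Set.zero_smul_set (hne.sub hne)]⟩
  | add v w _ _ hv hw =>
    obtain ⟨p, hp, hv⟩ := hv
    obtain ⟨q, hq, hw⟩ := hw
    exact ⟨p + q, add_nonneg hp hq, (hs.sub hs).add_smul hp hq ▸ Set.add_mem_add hv hw⟩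
  | smul t v _ hv =>
    obtain ⟨r, hr, _, ⟨x, hx, y, hy, rfl⟩, rfl⟩ := hv
    refine ⟨|t| * r, by positivity, ?_⟩
    rcases le_total 0 t with ht | ht
    · exact ⟨x - y, Set.sub_mem_sub hx hy, by simp only [abs_of_nonneg ht, mul_smul]⟩
    · exact ⟨y - x, Set.sub_mem_sub hy hx, by
        simp only [abs_of_nonpos ht, mul_smul, neg_smul, ← smul_neg, neg_sub]⟩

end Preliminaries

section Sign

/-- The sign of `y` is larger than the signs of `x` and `z`; for the values `x`, `y`, `z` of a
function along a chain this is the obstruction to single crossing. -/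
def SignPeak (x y z : ℝ) : Prop :=
  (x ≤ 0 ∧ 0 < y ∧ z ≤ 0) ∨ (x < 0 ∧ 0 ≤ y ∧ z < 0)

lemma real_sign_lt_sign_iff {x y : ℝ} :
    Real.sign x < Real.sign y ↔ (x ≤ 0 ∧ 0 < y) ∨ (x < 0 ∧ 0 ≤ y) := by
  rcases lt_trichotomy x 0 with hx | rfl | hx <;> rcases lt_trichotomy y 0 with hy | rfl | hy <;>
    simp [*, Real.sign_of_neg, Real.sign_of_pos, not_lt_of_gt, not_le_of_gt, le_of_lt]

lemma real_sign_mul (x y : ℝ) : Real.sign (x * y) = Real.sign x * Real.sign y := by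
  rcases lt_trichotomy x 0 with hx | rfl | hx <;> rcases lt_trichotomy y 0 with hy | rfl | hy <;>
    simp [*, Real.sign_of_neg, Real.sign_of_pos, mul_pos_of_neg_of_neg, mul_neg_of_neg_of_pos,
      mul_neg_of_pos_of_neg]

lemma signPeak_iff_sign_lt_sign {x y z : ℝ} :
    SignPeak x y z ↔ Real.sign x < Real.sign y ∧ Real.sign z < Real.sign y := by
  simp only [SignPeak, real_sign_lt_sign_iff]
  grind

end Sign

section SingleCrossing

variable {Θ : Type*} [PartialOrder Θ] {f : Θ → ℝ} {a b c : Θ}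

lemma singleCrossing_of_forall_not_signPeak [IsDirectedOrder Θ] [IsCodirectedOrder Θ]
    (hpeak : ∀ ⦃a b c⦄, a ≤ b → b ≤ c → ¬SignPeak (f a) (f b) (f c))
    (hvalley : ∀ ⦃a b c⦄, a ≤ b → b ≤ c → ¬SignPeak ((-f) a) ((-f) b) ((-f) c)) :
    SingleCrossing f := by
  simp only [Pi.neg_apply, signPeak_iff_sign_lt_sign, Real.sign_neg, neg_lt_neg_iff]
    at hpeak hvalley
  exact monotone_or_antitone_of_forall_le_le hpeak hvalley

namespace SingleCrossing

lemma not_signPeak (hf : SingleCrossing f) (hab : a ≤ b) (hbc : b ≤ c) :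
    ¬SignPeak (f a) (f b) (f c) := by
  rw [signPeak_iff_sign_lt_sign]
  rintro ⟨hlt, hgt⟩
  exact hf.elim (fun h ↦ (h hbc).not_gt hgt) fun h ↦ (h hab).not_gt hlt

lemma const_smul (hf : SingleCrossing f) (r : ℝ) : SingleCrossing (r • f) := by
  simp only [SingleCrossing, Pi.smul_apply, smul_eq_mul, real_sign_mul] at hf ⊢
  rcases le_total 0 (Real.sign r) with hr | hr
  · exact hf.imp (·.const_mul hr) (·.const_mul hr)
  · exact hf.symm.imp (·.const_mul_of_nonpos hr) (·.const_mul_of_nonpos hr)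

protected lemma neg (hf : SingleCrossing f) : SingleCrossing (-f) := by
  simpa using hf.const_smul (-1)

protected lemma zero : SingleCrossing (0 : Θ → ℝ) :=
  .inl fun _ _ _ ↦ le_rfl

lemma eq_zero_of_le_of_le (hf : SingleCrossing f) (hab : a ≤ b) (hbc : b ≤ c) (ha : f a = 0)
    (hc : f c = 0) : f b = 0 := by
  have hpeak := hf.not_signPeak hab hbc
  have hvalley := hf.neg.not_signPeak hab hbc
  simp only [SignPeak, Pi.neg_apply] at hpeak hvalley
  grind

lemma pos_of_eq_zero_left (hf : SingleCrossing f) (hab : a ≤ b) (hbc : b ≤ c) (ha : f a = 0)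
    (hb : 0 < f b) : 0 < f c :=
  not_le.1 fun hc ↦ hf.not_signPeak hab hbc (.inl ⟨ha.le, hb, hc⟩)

lemma pos_of_eq_zero_right (hf : SingleCrossing f) (hab : a ≤ b) (hbc : b ≤ c) (hb : 0 < f b)
    (hc : f c = 0) : 0 < f a :=
  not_le.1 fun ha ↦ hf.not_signPeak hab hbc (.inl ⟨ha, hb, hc.le⟩)

lemma eq_zero_of_eq_of_eq_zero_middle (hf : SingleCrossing f) (hab : a ≤ b) (hbc : b ≤ c)
    (hac : f a = f c) (hb : f b = 0) : f a = 0 := by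
  have hpeak := hf.not_signPeak hab hbc
  have hvalley := hf.neg.not_signPeak hab hbc
  simp only [SignPeak, Pi.neg_apply] at hpeak hvalley
  grind

end SingleCrossing

end SingleCrossing

section RatioDet

/-- The determinant of the vectors `(f₁ h, f₂ h)` and `(f₁ l, f₂ l)`, in terms of which ratio
dominance is expressed. It is nonnegative for `l < h` when `f₁` ratio dominates `f₂`. -/
def ratioDet {Θ : Type*} (f₁ f₂ : Θ → ℝ) (l h : Θ) : ℝ :=
  f₁ h * f₂ l - f₁ l * f₂ h

variable {Θ : Type*} {f₁ f₂ : Θ → ℝ}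

lemma ratioDet_self (f₁ f₂ : Θ → ℝ) (l : Θ) : ratioDet f₁ f₂ l l = 0 :=
  sub_self _

lemma ratioDet_swap_points (f₁ f₂ : Θ → ℝ) (l h : Θ) :
    ratioDet f₁ f₂ h l = -ratioDet f₁ f₂ l h :=
  (neg_sub _ _).symm

lemma ratioDet_swap_functions (f₁ f₂ : Θ → ℝ) (l h : Θ) :
    ratioDet f₂ f₁ l h = -ratioDet f₁ f₂ l h := by
  simp only [ratioDet]
  ring

lemma ratioDet_mem_span_pair (f₁ f₂ : Θ → ℝ) (l : Θ) : ratioDet f₁ f₂ l ∈ span ℝ {f₁, f₂} := by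
  refine mem_span_pair.2 ⟨f₂ l, -f₁ l, funext fun t ↦ ?_⟩
  simp only [ratioDet, Pi.add_apply, Pi.smul_apply, smul_eq_mul]
  ring

lemma ratioDet_flip_mem_span_pair (f₁ f₂ : Θ → ℝ) (h : Θ) :
    (fun l ↦ ratioDet f₁ f₂ l h) ∈ span ℝ {f₁, f₂} := by
  simp only [ratioDet_swap_points f₁ f₂ h]
  exact neg_mem (ratioDet_mem_span_pair f₁ f₂ h)

lemma ratioDet_mul_add_ratioDet_mul {w : Θ → ℝ} (hw : w ∈ span ℝ {f₁, f₂}) (a b c : Θ) :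
    ratioDet f₁ f₂ a b * w c + ratioDet f₁ f₂ b c * w a = ratioDet f₁ f₂ a c * w b := by
  obtain ⟨α, β, rfl⟩ := mem_span_pair.1 hw
  simp only [ratioDet, Pi.add_apply, Pi.smul_apply, smul_eq_mul]
  ring

lemma exists_eq_mul_of_ratioDet_eq_zero {w : Θ → ℝ} (hw : w ∈ span ℝ {f₁, f₂}) {p : Θ}
    (hp : w p ≠ 0) :
    ∃ f ∈ ({f₁, f₂} : Set (Θ → ℝ)), ∃ k : ℝ, ∀ t, ratioDet f₁ f₂ p t = 0 → w t = k * f t := by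
  obtain ⟨α, β, rfl⟩ := mem_span_pair.1 hw
  simp only [Pi.add_apply, Pi.smul_apply, smul_eq_mul] at hp
  have hne : f₁ p ≠ 0 ∨ f₂ p ≠ 0 := by
    by_contra! h
    simp [h] at hp
  rcases hne with hne | hne
  · refine ⟨f₁, .inl rfl, (α * f₁ p + β * f₂ p) / f₁ p, fun t ht ↦ ?_⟩
    simp only [ratioDet, Pi.add_apply, Pi.smul_apply, smul_eq_mul] at ht ⊢
    field_simp
    linear_combination -β * ht
  · refine ⟨f₂, .inr rfl, (α * f₁ p + β * f₂ p) / f₂ p, fun t ht ↦ ?_⟩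
    simp only [ratioDet, Pi.add_apply, Pi.smul_apply, smul_eq_mul] at ht ⊢
    field_simp
    linear_combination α * ht

end RatioDet

section RatioOrder

variable {Θ : Type*} [PartialOrder Θ] {f₁ f₂ : Θ → ℝ}

lemma ratioDominates_iff_ratioDet :
    RatioDominates f₁ f₂ ↔
      (∀ l h, l < h → 0 ≤ ratioDet f₁ f₂ l h) ∧
      ∀ l m h, l < m → m < h →
        (ratioDet f₁ f₂ l h = 0 ↔ ratioDet f₁ f₂ l m = 0 ∧ ratioDet f₁ f₂ m h = 0) := by
  have hzero (l h : Θ) : ratioDet f₁ f₂ l h = 0 ↔ f₁ l * f₂ h = f₁ h * f₂ l := by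
    rw [ratioDet, sub_eq_zero, eq_comm]
  simp only [RatioDominates, hzero]
  simp only [ratioDet, sub_nonneg]

lemma RatioDominates.ratioDet_eq_zero_of_signPeak (h : RatioDominates f₁ f₂) {w : Θ → ℝ}
    (hw : w ∈ span ℝ {f₁, f₂}) {a b c : Θ} (hab : a < b) (hbc : b < c)
    (hpeak : SignPeak (w a) (w b) (w c)) :
    ratioDet f₁ f₂ a b = 0 ∧ ratioDet f₁ f₂ b c = 0 ∧ ratioDet f₁ f₂ a c = 0 := by
  obtain ⟨hnonneg, hzero⟩ := ratioDominates_iff_ratioDet.1 h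
  have dab := hnonneg a b hab
  have dbc := hnonneg b c hbc
  have dac := hnonneg a c (hab.trans hbc)
  obtain ⟨ha, hb, hc⟩ : w a ≤ 0 ∧ 0 ≤ w b ∧ w c ≤ 0 := by grind [SignPeak]
  have hlin := ratioDet_mul_add_ratioDet_mul hw a b c
  have hab_wc := mul_nonpos_of_nonneg_of_nonpos dab hc
  have hbc_wa := mul_nonpos_of_nonneg_of_nonpos dbc ha
  have hac_wb := mul_nonneg dac hb
  rcases hpeak with ⟨-, hb, -⟩ | ⟨ha, -, hc⟩
  · have hac_zero : ratioDet f₁ f₂ a c * w b = 0 := by linarith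
    have dac_zero := (mul_eq_zero.1 hac_zero).resolve_right hb.ne'
    obtain ⟨dab_zero, dbc_zero⟩ := (hzero a b c hab hbc).1 dac_zero
    exact ⟨dab_zero, dbc_zero, dac_zero⟩
  · have hab_zero : ratioDet f₁ f₂ a b * w c = 0 := by linarith
    have hbc_zero : ratioDet f₁ f₂ b c * w a = 0 := by linarith
    have dab_zero := (mul_eq_zero.1 hab_zero).resolve_right hc.ne
    have dbc_zero := (mul_eq_zero.1 hbc_zero).resolve_right ha.ne
    exact ⟨dab_zero, dbc_zero, (hzero a b c hab hbc).2 ⟨dab_zero, dbc_zero⟩⟩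

lemma RatioDominates.not_signPeak (h : RatioDominates f₁ f₂)
    (hf : ∀ f ∈ ({f₁, f₂} : Set (Θ → ℝ)), SingleCrossing f) {w : Θ → ℝ}
    (hw : w ∈ span ℝ {f₁, f₂}) {a b c : Θ} (hab : a ≤ b) (hbc : b ≤ c) :
    ¬SignPeak (w a) (w b) (w c) := by
  intro hpeak
  have hab' : a < b := hab.lt_of_ne <| by rintro rfl; grind [SignPeak]
  have hbc' : b < c := hbc.lt_of_ne <| by rintro rfl; grind [SignPeak]
  obtain ⟨dab, dbc, dac⟩ := h.ratioDet_eq_zero_of_signPeak hw hab' hbc' hpeak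
  obtain ⟨p, hp, hpa, hpb, hpc⟩ : ∃ p, w p ≠ 0 ∧ ratioDet f₁ f₂ p a = 0 ∧
      ratioDet f₁ f₂ p b = 0 ∧ ratioDet f₁ f₂ p c = 0 := by
    rcases hpeak with ⟨-, hb, -⟩ | ⟨ha, -, -⟩
    · exact ⟨b, hb.ne', by rw [ratioDet_swap_points, dab, neg_zero], ratioDet_self .., dbc⟩
    · exact ⟨a, ha.ne, ratioDet_self .., dab, dac⟩
  obtain ⟨f, hfmem, k, hk⟩ := exists_eq_mul_of_ratioDet_eq_zero hw hp
  rw [hk a hpa, hk b hpb, hk c hpc] at hpeak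
  exact ((hf f hfmem).const_smul k).not_signPeak hab hbc hpeak

lemma RatioDominates.singleCrossing_of_mem_span [IsDirectedOrder Θ] [IsCodirectedOrder Θ]
    (h : RatioDominates f₁ f₂) (h₁ : SingleCrossing f₁) (h₂ : SingleCrossing f₂) {w : Θ → ℝ}
    (hw : w ∈ span ℝ {f₁, f₂}) : SingleCrossing w := by
  have hf : ∀ f ∈ ({f₁, f₂} : Set (Θ → ℝ)), SingleCrossing f := by
    rintro _ (rfl | rfl)
    exacts [h₁, h₂]
  exact singleCrossing_of_forall_not_signPeak (fun _ _ _ ↦ h.not_signPeak hf hw)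
    fun _ _ _ ↦ h.not_signPeak hf (neg_mem hw)

lemma ratioDet_eq_zero_iff_of_forall_mem_span (hsc : ∀ w ∈ span ℝ {f₁, f₂}, SingleCrossing w)
    {a b c : Θ} (hab : a ≤ b) (hbc : b ≤ c) :
    ratioDet f₁ f₂ a c = 0 ↔ ratioDet f₁ f₂ a b = 0 ∧ ratioDet f₁ f₂ b c = 0 := by
  have hleft := ratioDet_mem_span_pair f₁ f₂ a
  have hright := ratioDet_flip_mem_span_pair f₁ f₂ c
  refine ⟨fun hac ↦ ⟨?_, ?_⟩, fun ⟨dab, dbc⟩ ↦ ?_⟩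
  · exact (hsc _ hleft).eq_zero_of_le_of_le hab hbc (ratioDet_self ..) hac
  · exact (hsc _ hright).eq_zero_of_le_of_le hab hbc hac (ratioDet_self ..)
  -- The sum of the two determinants takes the value `ratioDet f₁ f₂ a c` at both `a` and `c`.
  · simpa [ratioDet_self] using
      (hsc _ (add_mem hleft hright)).eq_zero_of_eq_of_eq_zero_middle hab hbc
        (by simp [ratioDet_self]) (by simp [dab, dbc])

lemma ratioDet_pos_of_le_of_le (hsc : ∀ w ∈ span ℝ {f₁, f₂}, SingleCrossing w) {p l h q : Θ}
    (hpl : p ≤ l) (hlh : l ≤ h) (hhq : h ≤ q) (hpos : 0 < ratioDet f₁ f₂ l h) :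
    0 < ratioDet f₁ f₂ p q :=
  have hlq : 0 < ratioDet f₁ f₂ l q :=
    (hsc _ (ratioDet_mem_span_pair f₁ f₂ l)).pos_of_eq_zero_left hlh hhq (ratioDet_self ..) hpos
  (hsc _ (ratioDet_flip_mem_span_pair f₁ f₂ q)).pos_of_eq_zero_right hpl (hlh.trans hhq) hlq
    (ratioDet_self ..)

lemma ratioOrdered_of_forall_mem_span [IsDirectedOrder Θ] [IsCodirectedOrder Θ]
    (hsc : ∀ w ∈ span ℝ {f₁, f₂}, SingleCrossing w) : RatioOrdered f₁ f₂ := by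
  have hsc' : ∀ w ∈ span ℝ {f₂, f₁}, SingleCrossing w := by rwa [Set.pair_comm]
  simp only [RatioOrdered, ratioDominates_iff_ratioDet]
  refine Or.imp
    (⟨·, fun _ _ _ hab hbc ↦ ratioDet_eq_zero_iff_of_forall_mem_span hsc hab.le hbc.le⟩)
    (⟨·, fun _ _ _ hab hbc ↦ ratioDet_eq_zero_iff_of_forall_mem_span hsc' hab.le hbc.le⟩) ?_
  by_contra! ⟨⟨l, h, hlh, hneg⟩, l', h', hlh', hneg'⟩
  rw [← neg_pos, ← ratioDet_swap_functions] at hneg hneg'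
  obtain ⟨p, hpl, hpl'⟩ := exists_le_le l l'
  obtain ⟨q, hhq, hhq'⟩ := exists_ge_ge h h'
  have hpos := ratioDet_pos_of_le_of_le hsc hpl' hlh'.le hhq' hneg'
  have hpos' := ratioDet_pos_of_le_of_le hsc' hpl hlh.le hhq hneg
  rw [ratioDet_swap_functions, neg_pos] at hpos'
  exact hpos.not_gt hpos'

theorem forall_mem_span_pair_singleCrossing_iff [IsDirectedOrder Θ] [IsCodirectedOrder Θ] :
    (∀ w ∈ span ℝ {f₁, f₂}, SingleCrossing w) ↔
      SingleCrossing f₁ ∧ SingleCrossing f₂ ∧ RatioOrdered f₁ f₂ := by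
  refine ⟨fun hsc ↦ ⟨hsc _ (subset_span (.inl rfl)), hsc _ (subset_span (.inr rfl)),
    ratioOrdered_of_forall_mem_span hsc⟩, ?_⟩
  rintro ⟨h₁, h₂, h | h⟩ w hw
  · exact h.singleCrossing_of_mem_span h₁ h₂ hw
  · exact h.singleCrossing_of_mem_span h₂ h₁ (Set.pair_comm f₁ f₂ ▸ hw)

end RatioOrder

section Dimension

/-- Evaluation of the elements of a space of functions at a pair of points. -/
def evalPair {Θ : Type*} (W : Submodule ℝ (Θ → ℝ)) (p : Θ × Θ) : W →ₗ[ℝ] ℝ × ℝ :=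
  ((LinearMap.proj p.1).prod (LinearMap.proj p.2)).comp W.subtype

variable {Θ : Type*}

lemma mem_ker_evalPair {W : Submodule ℝ (Θ → ℝ)} {p : Θ × Θ} {w : W} :
    w ∈ (evalPair W p).ker ↔ w.1 p.1 = 0 ∧ w.1 p.2 = 0 := by
  simp [evalPair]

lemma exists_eq_span_pair_of_ker_evalPair_eq_bot {W : Submodule ℝ (Θ → ℝ)} {p : Θ × Θ}
    (hW : (evalPair W p).ker = ⊥) : ∃ x y, W = span ℝ {x, y} := by
  obtain ⟨r, hr⟩ := (evalPair W p).exists_leftInverse_of_injective hW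
  refine ⟨r (1, 0), r (0, 1), le_antisymm (fun w hw ↦ mem_span_pair.2 ⟨w p.1, w p.2, ?_⟩) ?_⟩
  · have hrw : r (w p.1, w p.2) = ⟨w, hw⟩ := LinearMap.congr_fun hr ⟨w, hw⟩
    rw [← Submodule.coe_smul, ← Submodule.coe_smul, ← Submodule.coe_add, ← map_smul, ← map_smul,
      ← map_add]
    simp [hrw]
  · rw [span_le]
    rintro _ (rfl | rfl) <;> exact Subtype.prop _

variable [PartialOrder Θ] [IsDirectedOrder Θ] [IsCodirectedOrder Θ] {W : Submodule ℝ (Θ → ℝ)}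

lemma exists_ker_evalPair_eq_bot [Nonempty Θ] (hW : ∀ w ∈ W, SingleCrossing w) :
    ∃ p, (evalPair W p).ker = ⊥ := by
  obtain ⟨t₀⟩ := ‹Nonempty Θ›
  have hbdd : ((fun p ↦ finrank ℝ (evalPair W p).range) '' {p : Θ × Θ | p.1 ≤ p.2}).Finite :=
    (Set.finite_Iic (finrank ℝ (ℝ × ℝ))).subset <| Set.image_subset_iff.2 fun _ _ ↦ finrank_le _
  obtain ⟨⟨l, h⟩, hlh : l ≤ h, hmax⟩ := Set.Finite.exists_maximalFor' _ _ hbdd ⟨(t₀, t₀), le_rfl⟩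
  refine ⟨(l, h), (Submodule.eq_bot_iff _).2 fun w hw ↦ Subtype.ext (funext fun t ↦ ?_)⟩
  obtain ⟨l', hl'l, hl't⟩ := exists_le_le l t
  obtain ⟨h', hhh', hth'⟩ := exists_ge_ge h t
  have hker : (evalPair W (l', h')).ker ≤ (evalPair W (l, h)).ker := fun v hv ↦ by
    rw [mem_ker_evalPair] at hv ⊢
    exact ⟨(hW v v.2).eq_zero_of_le_of_le hl'l (hlh.trans hhh') hv.1 hv.2,
      (hW v v.2).eq_zero_of_le_of_le (hl'l.trans hlh) hhh' hv.1 hv.2⟩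
  have hrank : finrank ℝ (evalPair W (l', h')).range ≤ finrank ℝ (evalPair W (l, h)).range :=
    le_of_not_gt fun hlt ↦ hlt.not_ge (hmax (hl't.trans hth') hlt.le)
  rw [← ker_eq_of_ker_le_of_finrank_range_le hker hrank, mem_ker_evalPair] at hw
  exact (hW w w.2).eq_zero_of_le_of_le hl't hth' hw.1 hw.2

theorem exists_eq_span_pair_of_singleCrossing (hW : ∀ w ∈ W, SingleCrossing w) :
    ∃ x y, W = span ℝ {x, y} := by
  rcases isEmpty_or_nonempty Θ with _ | _
  · exact ⟨0, 0, Subsingleton.elim _ _⟩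
  · obtain ⟨p, hp⟩ := exists_ker_evalPair_eq_bot hW
    exact exists_eq_span_pair_of_ker_evalPair_eq_bot hp

end Dimension

section ConvexEnv

lemma ConvexEnv.convex_range {A Θ : Type*} {u : A → Θ → ℝ} (hu : ConvexEnv u) :
    Convex ℝ (Set.range u) := by
  rw [convex_iff_forall_pos]
  rintro _ ⟨a, rfl⟩ _ ⟨a', rfl⟩ s t hs ht hst
  obtain ⟨a'', ha''⟩ := hu a a' s hs (by linarith)
  exact ⟨a'', funext fun θ ↦ by simp [ha'', ← hst]⟩

theorem SCD.singleCrossing_of_mem_vectorSpan {A Θ : Type*} [PartialOrder Θ] {u : A → Θ → ℝ}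
    (hscd : SCD u) (hu : ConvexEnv u) {w : Θ → ℝ} (hw : w ∈ vectorSpan ℝ (Set.range u)) :
    SingleCrossing w := by
  rcases isEmpty_or_nonempty A with _ | _
  · rw [Set.range_eq_empty, vectorSpan_empty, Submodule.mem_bot] at hw
    exact hw ▸ .zero
  · obtain ⟨r, -, _, ⟨_, ⟨a, rfl⟩, _, ⟨a', rfl⟩, rfl⟩, rfl⟩ :=
      exists_nonneg_mem_smul_sub_of_mem_vectorSpan hu.convex_range (Set.range_nonempty u) hw
    exact SingleCrossing.const_smul (hscd a a') r

end ConvexEnv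

section Additive

variable {Θ ι : Type*} [Fintype ι] {A : ι → Type*} {g : ∀ i, A i → ℝ} {f : ι → Θ → ℝ}
  {u : (∀ i, A i) → Θ → ℝ}

lemma convexEnv_of_convex_range (hu : ∀ a θ, u a θ = ∑ i, g i (a i) * f i θ)
    (hconv : ∀ i, Convex ℝ (Set.range (g i))) : ConvexEnv u := by
  intro a a' r hr hr1
  have hmix (i : ι) : ∃ x, g i x = r * g i (a i) + (1 - r) * g i (a' i) :=
    hconv i ⟨a i, rfl⟩ ⟨a' i, rfl⟩ hr.le (sub_nonneg.2 hr1.le) (by ring)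
  choose a'' ha'' using hmix
  refine ⟨a'', fun θ ↦ ?_⟩
  simp only [hu, ha'', Finset.mul_sum, ← Finset.sum_add_distrib]
  exact Finset.sum_congr rfl fun i _ ↦ by ring

lemma sub_smul_mem_vectorSpan (hu : ∀ a θ, u a θ = ∑ i, g i (a i) * f i θ) (a a' : ∀ i, A i)
    (i : ι) : (g i (a i) - g i (a' i)) • f i ∈ vectorSpan ℝ (Set.range u) := by
  classical
  convert vsub_mem_vectorSpan ℝ (Set.mem_range_self a)
    (Set.mem_range_self (Function.update a i (a' i)))
  ext θ
  rw [vsub_eq_sub, Pi.sub_apply, hu, hu, ← Finset.sum_sub_distrib,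
    Finset.sum_eq_single_of_mem i (Finset.mem_univ i) fun j _ hj ↦ by simp [hj]]
  simp [sub_mul]

lemma exists_sub_mul_eq_of_vectorSpan_le_span_pair
    (hu : ∀ a θ, u a θ = ∑ i, g i (a i) * f i θ) {x y : Θ → ℝ}
    (hW : vectorSpan ℝ (Set.range u) ≤ span ℝ {x, y}) (i : ι) :
    ∃ α β : ℝ, ∀ (a a' : ∀ i, A i) (θ : Θ), (g i (a i) - g i (a' i)) * f i θ =
      (g i (a i) - g i (a' i)) * (α * x θ + β * y θ) := by
  by_cases hconst : ∀ a a' : ∀ i, A i, g i (a i) - g i (a' i) = 0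
  · exact ⟨0, 0, fun a a' θ ↦ by simp only [hconst a a', zero_mul]⟩
  · push Not at hconst
    obtain ⟨a₁, a₂, hne⟩ := hconst
    have hf : f i ∈ span ℝ {x, y} :=
      (smul_mem_iff _ hne).1 (hW (sub_smul_mem_vectorSpan hu a₁ a₂ i))
    obtain ⟨α, β, hf⟩ := mem_span_pair.1 hf
    exact ⟨α, β, fun a a' θ ↦ by simp [← hf]⟩

lemma exists_summary_of_vectorSpan_le_span_pair
    (hu : ∀ a θ, u a θ = ∑ i, g i (a i) * f i θ) {x y : Θ → ℝ}
    (hW : vectorSpan ℝ (Set.range u) ≤ span ℝ {x, y}) :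
    ∃ (lamI lamII : ι → ℝ) (h : Θ → ℝ), ∀ a θ,
      u a θ = (∑ i, lamI i * g i (a i)) * x θ + (∑ i, lamII i * g i (a i)) * y θ + h θ := by
  choose lamI lamII hlam using exists_sub_mul_eq_of_vectorSpan_le_span_pair hu hW
  rcases isEmpty_or_nonempty (∀ i, A i) with _ | ⟨⟨a₀⟩⟩
  · exact ⟨lamI, lamII, 0, isEmptyElim⟩
  refine ⟨lamI, lamII, fun θ ↦ ∑ i, g i (a₀ i) * (f i θ - (lamI i * x θ + lamII i * y θ)),
    fun a θ ↦ ?_⟩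
  rw [hu, Finset.sum_mul, Finset.sum_mul, ← Finset.sum_add_distrib, ← Finset.sum_add_distrib]
  exact Finset.sum_congr rfl fun i _ ↦ by linear_combination hlam i a a₀ θ

end Additive

theorem multidim_scd_iff_general {Θ : Type*} [PartialOrder Θ] [IsDirectedOrder Θ]
    [IsCodirectedOrder Θ] {ι : Type*} [Fintype ι] {A : ι → Type*} (g : ∀ i, A i → ℝ)
    (f : ι → Θ → ℝ) (u : (∀ i, A i) → Θ → ℝ)
    (hu : ∀ (a : ∀ i, A i) (θ : Θ), u a θ = ∑ i, g i (a i) * f i θ) (hconv : ConvexEnv u) :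
    SCD u ↔
      ∃ (lamI lamII : ι → ℝ) (fI fII h : Θ → ℝ),
        SingleCrossing fI ∧ SingleCrossing fII ∧ RatioOrdered fI fII ∧
        (∀ (a : ∀ i, A i) (θ : Θ),
          u a θ = (∑ i, lamI i * g i (a i)) * fI θ +
                    (∑ i, lamII i * g i (a i)) * fII θ + h θ) := by
  constructor
  · intro hscd
    have hW := fun w ↦ hscd.singleCrossing_of_mem_vectorSpan hconv (w := w)
    obtain ⟨fI, fII, hspan⟩ := exists_eq_span_pair_of_singleCrossing hW
    rw [hspan, forall_mem_span_pair_singleCrossing_iff] at hW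
    obtain ⟨lamI, lamII, h, hrep⟩ := exists_summary_of_vectorSpan_le_span_pair hu hspan.le
    exact ⟨lamI, lamII, fI, fII, h, hW.1, hW.2.1, hW.2.2, hrep⟩
  · rintro ⟨lamI, lamII, fI, fII, h, hI, hII, hro, hrep⟩ a a'
    refine forall_mem_span_pair_singleCrossing_iff.2 ⟨hI, hII, hro⟩ _ (mem_span_pair.2
      ⟨∑ i, lamI i * g i (a i) - ∑ i, lamI i * g i (a' i),
        ∑ i, lamII i * g i (a i) - ∑ i, lamII i * g i (a' i), funext fun θ ↦ ?_⟩)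
    simp only [hrep, Pi.add_apply, Pi.smul_apply, smul_eq_mul]
    ring

/-- A multidimensional utility has SCD iff it depends on at most
two summary dimensions with single-crossing, ratio-ordered weights. -/
theorem multidim_scd_iff {Θ : Type*} [PartialOrder Θ]
    (hub : ∀ θ₁ θ₂ : Θ, ∃ θ : Θ, θ₁ ≤ θ ∧ θ₂ ≤ θ)
    (hlb : ∀ θ₁ θ₂ : Θ, ∃ θ : Θ, θ ≤ θ₁ ∧ θ ≤ θ₂)
    {n : ℕ} {A : Fin n → Type*} (g : ∀ i, A i → ℝ)
    (hconv : ∀ i, Convex ℝ (Set.range (g i)))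
    (f : Fin n → Θ → ℝ)
    (u : (∀ i, A i) → Θ → ℝ)
    (hu : ∀ (a : ∀ i, A i) (θ : Θ), u a θ = ∑ i, g i (a i) * f i θ) :
    SCD u ↔
      ∃ (lamI lamII : Fin n → ℝ) (fI fII h : Θ → ℝ),
        SingleCrossing fI ∧ SingleCrossing fII ∧ RatioOrdered fI fII ∧
        (∀ (a : ∀ i, A i) (θ : Θ),
          u a θ = (∑ i, lamI i * g i (a i)) * fI θ +
                    (∑ i, lamII i * g i (a i)) * fII θ + h θ) := by
  have : IsDirectedOrder Θ := ⟨hub⟩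
  have : IsCodirectedOrder Θ := ⟨hlb⟩
  exact multidim_scd_iff_general g f u hu (convexEnv_of_convex_range hu hconv)
end

section
/- Let Θ be a partially ordered set in which every pair of elements has an upper bound and a lower bound in Θ, and let f₁, f₂ : Θ → ℝ be monotone functions. Then the linear combination θ ↦ α₁·f₁(θ) + α₂·f₂(θ) is monotone for every (α₁, α₂) ∈ ℝ² if and only if one of f₁, f₂ is an affine transformation of the other, i.e., there exists (λ₁, λ₂) ∈ ℝ² such that either f₂(θ) = λ₁·f₁(θ) + λ₂ for all θ, or f₁(θ) = λ₁·f₂(θ) + λ₂ for all θ. -/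
section Order

lemma eq_left_of_monotone_or_antitone_of_mem_Icc {α β : Type*} [Preorder α] [PartialOrder β]
    {f : α → β} (hf : Monotone f ∨ Antitone f) {a b x : α} (hx : x ∈ Set.Icc a b)
    (hab : f a = f b) : f x = f a := by
  rcases hf with hf | hf
  · exact le_antisymm ((hf hx.2).trans_eq hab.symm) (hf hx.1)
  · exact le_antisymm (hf hx.1) (hab.trans_le (hf hx.2))

lemma monotone_or_antitone_const_mul_add {α R : Type*} [Preorder α] [Ring R] [LinearOrder R]
    [IsOrderedRing R] {f : α → R} (hf : Monotone f ∨ Antitone f) (c d : R) :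
    Monotone (fun x => c * f x + d) ∨ Antitone (fun x => c * f x + d) := by
  rcases le_total 0 c with hc | hc <;> rcases hf with hf | hf
  · exact .inl ((hf.const_mul hc).add_const d)
  · exact .inr ((hf.const_mul hc).add_const d)
  · exact .inr ((hf.const_mul_of_nonpos hc).add_const d)
  · exact .inl ((hf.const_mul_of_nonpos hc).add_const d)

lemma exists_mem_Icc_triple {α : Type*} [Preorder α] [IsDirectedOrder α] [IsCodirectedOrder α]
    (x y z : α) : ∃ a b, x ∈ Set.Icc a b ∧ y ∈ Set.Icc a b ∧ z ∈ Set.Icc a b := by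
  obtain ⟨a, hax, hay, haz⟩ := directed_of₃ (· ≥ ·) x y z
  obtain ⟨b, hxb, hyb, hzb⟩ := directed_of₃ (· ≤ ·) x y z
  exact ⟨a, b, ⟨hax, hxb⟩, ⟨hay, hyb⟩, ⟨haz, hzb⟩⟩

end Order

lemma collinear_of_forall_triple {k V P : Type*} [DivisionRing k] [AddCommGroup V] [Module k V]
    [AddTorsor V P] {s : Set P}
    (h : ∀ p ∈ s, ∀ q ∈ s, ∀ r ∈ s, Collinear k {p, q, r}) : Collinear k s := by
  rcases s.subsingleton_or_nontrivial with hs | ⟨p, hp, q, hq, hpq⟩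
  · rcases hs.eq_empty_or_singleton with rfl | ⟨p, rfl⟩
    · exact collinear_empty k P
    · exact collinear_singleton k p
  · refine (collinear_iff_of_mem hp).mpr ⟨q -ᵥ p, fun r hr => ?_⟩
    have hr_line : r ∈ line[k, p, q] :=
      (h p hp q hq r hr).mem_affineSpan_of_mem_of_ne (by simp) (by simp) (by simp) hpq
    rw [← vsub_vadd r p, vadd_left_mem_affineSpan_pair] at hr_line
    obtain ⟨t, ht⟩ := hr_line
    exact ⟨t, by rw [ht, vsub_vadd]⟩

section MonotoneFunctionals

variable {Θ K V : Type*} [Preorder Θ] [Field K] [PartialOrder K] [AddCommGroup V] [Module K V]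
  {f : Θ → V}

lemma sub_mem_span_of_dual_monotone_or_antitone
    (hf : ∀ φ : Module.Dual K V, Monotone (fun θ => φ (f θ)) ∨ Antitone (fun θ => φ (f θ)))
    {a b x : Θ} (hx : x ∈ Set.Icc a b) : f x - f a ∈ K ∙ (f b - f a) := by
  rw [← Subspace.forall_mem_dualAnnihilator_apply_eq_zero_iff]
  intro φ hφ
  have hab : φ (f b - f a) = 0 :=
    (Submodule.mem_dualAnnihilator φ).mp hφ _ (Submodule.mem_span_singleton_self _)
  rw [map_sub, sub_eq_zero] at hab ⊢
  exact eq_left_of_monotone_or_antitone_of_mem_Icc (hf φ) hx hab.symm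

lemma collinear_image_Icc_of_dual_monotone_or_antitone
    (hf : ∀ φ : Module.Dual K V, Monotone (fun θ => φ (f θ)) ∨ Antitone (fun θ => φ (f θ)))
    (a b : Θ) : Collinear K (f '' Set.Icc a b) := by
  refine (collinear_iff_exists_forall_eq_smul_vadd _).mpr ⟨f a, f b - f a, ?_⟩
  rintro _ ⟨x, hx, rfl⟩
  obtain ⟨r, hr⟩ :=
    Submodule.mem_span_singleton.mp (sub_mem_span_of_dual_monotone_or_antitone hf hx)
  exact ⟨r, by rw [hr, vadd_eq_add, sub_add_cancel]⟩

lemma collinear_range_of_dual_monotone_or_antitone [IsDirectedOrder Θ] [IsCodirectedOrder Θ]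
    (hf : ∀ φ : Module.Dual K V, Monotone (fun θ => φ (f θ)) ∨ Antitone (fun θ => φ (f θ))) :
    Collinear K (Set.range f) := by
  refine collinear_of_forall_triple ?_
  rintro _ ⟨x, rfl⟩ _ ⟨y, rfl⟩ _ ⟨z, rfl⟩
  obtain ⟨a, b, hx, hy, hz⟩ := exists_mem_Icc_triple x y z
  refine (collinear_image_Icc_of_dual_monotone_or_antitone hf a b).subset ?_
  rintro _ (rfl | rfl | rfl)
  exacts [Set.mem_image_of_mem f hx, Set.mem_image_of_mem f hy, Set.mem_image_of_mem f hz]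

end MonotoneFunctionals

lemma dual_prod_apply {R : Type*} [CommSemiring R] (φ : Module.Dual R (R × R)) (x y : R) :
    φ (x, y) = φ (1, 0) * x + φ (0, 1) * y := by
  have hxy : (x, y) = x • (1, 0) + y • (0, 1) := by simp
  rw [hxy, map_add, map_smul, map_smul, smul_eq_mul, smul_eq_mul, mul_comm x, mul_comm y]

lemma exists_affine_of_collinear_range_prodMk {ι K : Type*} [Field K] {f₁ f₂ : ι → K}
    (h : Collinear K (Set.range fun i => (f₁ i, f₂ i))) :
    ∃ c d : K, (∀ i, f₂ i = c * f₁ i + d) ∨ (∀ i, f₁ i = c * f₂ i + d) := by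
  obtain ⟨⟨p₁, p₂⟩, ⟨v₁, v₂⟩, hline⟩ := (collinear_iff_exists_forall_eq_smul_vadd _).mp h
  have hcoord : ∀ i, ∃ r, f₁ i = r * v₁ + p₁ ∧ f₂ i = r * v₂ + p₂ := fun i => by
    simpa using hline _ (Set.mem_range_self i)
  by_cases hv₁ : v₁ = 0
  · refine ⟨0, p₁, .inr fun i => ?_⟩
    obtain ⟨r, hr₁, -⟩ := hcoord i
    simp [hr₁, hv₁]
  · refine ⟨v₂ / v₁, p₂ - v₂ / v₁ * p₁, .inl fun i => ?_⟩
    obtain ⟨r, hr₁, hr₂⟩ := hcoord i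
    rw [hr₁, hr₂]
    field_simp
    ring

lemma linComb_monotone_or_antitone_of_affine {Θ R : Type*} [Preorder Θ] [Ring R]
    [LinearOrder R] [IsOrderedRing R] {f g : Θ → R} (hf : Monotone f ∨ Antitone f) {c d : R}
    (hg : ∀ θ, g θ = c * f θ + d) (α β : R) :
    Monotone (fun θ => α * f θ + β * g θ) ∨ Antitone (fun θ => α * f θ + β * g θ) := by
  have hlin : (fun θ => α * f θ + β * g θ) = fun θ => (α + β * c) * f θ + β * d := by
    funext θ
    rw [hg, mul_add, add_mul, mul_assoc, add_assoc]
  rw [hlin]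
  exact monotone_or_antitone_const_mul_add hf _ _

theorem linComb_monotone_iff_affine_general {Θ K : Type*} [Preorder Θ] [IsDirectedOrder Θ]
    [IsCodirectedOrder Θ] [Field K] [LinearOrder K] [IsOrderedRing K] (f₁ f₂ : Θ → K)
    (hf₁ : Monotone f₁ ∨ Antitone f₁) (hf₂ : Monotone f₂ ∨ Antitone f₂) :
    (∀ α₁ α₂ : K,
      Monotone (fun θ => α₁ * f₁ θ + α₂ * f₂ θ) ∨
        Antitone (fun θ => α₁ * f₁ θ + α₂ * f₂ θ)) ↔
      ∃ c d : K, (∀ θ, f₂ θ = c * f₁ θ + d) ∨ (∀ θ, f₁ θ = c * f₂ θ + d) := by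
  constructor
  · intro hcomb
    refine exists_affine_of_collinear_range_prodMk
      (collinear_range_of_dual_monotone_or_antitone fun φ => ?_)
    simpa only [dual_prod_apply φ (f₁ _) (f₂ _)] using hcomb (φ (1, 0)) (φ (0, 1))
  · rintro ⟨c, d, h₂ | h₁⟩ α₁ α₂
    · exact linComb_monotone_or_antitone_of_affine hf₁ h₂ α₁ α₂
    · simpa only [add_comm (α₂ * f₂ _)] using linComb_monotone_or_antitone_of_affine hf₂ h₁ α₂ α₁

/-- For monotone `f₁, f₂`, all linear combinations are monotone
iff one of them is an affine transformation of the other. -/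
theorem linComb_monotone_iff_affine {Θ : Type*} [PartialOrder Θ]
    (hub : ∀ θ₁ θ₂ : Θ, ∃ θ : Θ, θ₁ ≤ θ ∧ θ₂ ≤ θ)
    (hlb : ∀ θ₁ θ₂ : Θ, ∃ θ : Θ, θ ≤ θ₁ ∧ θ ≤ θ₂)
    (f₁ f₂ : Θ → ℝ)
    (hf₁ : Monotone f₁ ∨ Antitone f₁) (hf₂ : Monotone f₂ ∨ Antitone f₂) :
    (∀ α₁ α₂ : ℝ,
      Monotone (fun θ => α₁ * f₁ θ + α₂ * f₂ θ) ∨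
        Antitone (fun θ => α₁ * f₁ θ + α₂ * f₂ θ)) ↔
      ∃ lam₁ lam₂ : ℝ,
        (∀ θ, f₂ θ = lam₁ * f₁ θ + lam₂) ∨ (∀ θ, f₁ θ = lam₁ * f₂ θ + lam₂) := by
  have : IsDirectedOrder Θ := ⟨hub⟩
  have : IsCodirectedOrder Θ := ⟨hlb⟩
  exact linComb_monotone_iff_affine_general f₁ f₂ hf₁ hf₂
end

section
/- Let Θ be a partially ordered set in which every pair of elements has an upper bound and a lower bound in Θ, let Z be a nonempty set, and let f : Z × Θ → ℝ. Then f is linear combinations monotonicity-preserving if and only if there exist z' ∈ Z and functions λ₁, λ₂ : Z → ℝ such that (1) f(z', ·) : Θ → ℝ is monotone, and (2) for all z ∈ Z and θ ∈ Θ, f(z, θ) = λ₁(z)·f(z', θ) + λ₂(z). -/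
lemma exists_forall_eq_of_eqvGen {α β : Type*} [Nonempty β] {r : α → α → Prop} {g : α → β}
    (hr : ∀ x y, Relation.EqvGen r x y) (hg : ∀ x y, r x y → g x = g y) : ∃ c, ∀ x, g x = c := by
  rcases isEmpty_or_nonempty α with _ | ⟨⟨x₀⟩⟩
  · exact ⟨Classical.arbitrary β, isEmptyElim⟩
  · exact ⟨g x₀, fun x => congrArg (Quot.lift g hg) (Quot.eqvGen_sound (hr x x₀))⟩

lemma eqvGen_le_of_le_of_le {α : Type*} [LE α] {a b c : α} (hac : a ≤ c) (hbc : b ≤ c) :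
    Relation.EqvGen (· ≤ ·) a b :=
  .trans _ _ _ (.rel _ _ hac) (.symm _ _ (.rel _ _ hbc))

section MonotoneSpan

variable {Θ Z : Type*} [Preorder Θ]

section OrderedRing

variable {R : Type*} [CommRing R] [LinearOrder R] [IsStrictOrderedRing R]

lemma sub_mul_sub_eq_of_forall_mem_monotone_or_antitone {V : Submodule R (Θ → R)}
    (hV : ∀ g ∈ V, Monotone g ∨ Antitone g) {g h : Θ → R} (hg : g ∈ V) (hh : h ∈ V)
    {s t p q : Θ} (hst : s ≤ t) (hpq : p ≤ q) :
    (g t - g s) * (h q - h p) = (g q - g p) * (h t - h s) := by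
  have hmem : ((h t - h s) + (h q - h p)) • g - ((g t - g s) + (g q - g p)) • h ∈ V :=
    V.sub_mem (V.smul_mem _ hg) (V.smul_mem _ hh)
  rcases hV _ hmem with hmono | hanti
  · have h_st := hmono hst
    have h_pq := hmono hpq
    simp only [Pi.sub_apply, Pi.smul_apply, smul_eq_mul] at h_st h_pq
    linarith
  · have h_st := hanti hst
    have h_pq := hanti hpq
    simp only [Pi.sub_apply, Pi.smul_apply, smul_eq_mul] at h_st h_pq
    linarith

lemma monotone_or_antitone_of_mem_span_pair_one {g h : Θ → R} (hh : Monotone h ∨ Antitone h)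
    (hg : g ∈ Submodule.span R {h, 1}) : Monotone g ∨ Antitone g := by
  obtain ⟨a, b, rfl⟩ := Submodule.mem_span_pair.mp hg
  rcases le_total 0 a with ha | ha
  · exact hh.imp (fun hmono => (hmono.const_mul ha).add_const (b * 1))
      fun hanti => (hanti.const_mul ha).add_const (b * 1)
  · exact hh.symm.imp (fun hanti => (hanti.const_mul_of_nonpos ha).add_const (b * 1))
      fun hmono => (hmono.const_mul_of_nonpos ha).add_const (b * 1)

end OrderedRing

variable {K : Type*} [Field K] [LinearOrder K] [IsStrictOrderedRing K]

lemma exists_forall_sub_eq_mul_sub [Nonempty Z] {f : Z → Θ → K}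
    (hf : ∀ g ∈ Submodule.span K (Set.range f), Monotone g ∨ Antitone g) :
    ∃ z', ∀ z, ∃ c, ∀ p q, p ≤ q → f z q - f z p = c * (f z' q - f z' p) := by
  by_cases hvar : ∃ z' s t, s ≤ t ∧ f z' t - f z' s ≠ 0
  · obtain ⟨z', s, t, hst, hne⟩ := hvar
    refine ⟨z', fun z => ⟨(f z t - f z s) / (f z' t - f z' s), fun p q hpq => ?_⟩⟩
    have hdet := sub_mul_sub_eq_of_forall_mem_monotone_or_antitone hf
      (Submodule.subset_span ⟨z', rfl⟩) (Submodule.subset_span ⟨z, rfl⟩) hst hpq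
    field_simp
    linear_combination hdet
  · push Not at hvar
    exact ⟨Classical.arbitrary Z, fun z => ⟨0, fun p q hpq => by
      rw [hvar z p q hpq, zero_mul]⟩⟩

lemma exists_forall_eq_mul_add [Nonempty Z] {f : Z → Θ → K}
    (hΘ : ∀ s t : Θ, Relation.EqvGen (· ≤ ·) s t)
    (hf : ∀ g ∈ Submodule.span K (Set.range f), Monotone g ∨ Antitone g) :
    ∃ (z' : Z) (a b : Z → K), ∀ z θ, f z θ = a z * f z' θ + b z := by
  obtain ⟨z', hz'⟩ := exists_forall_sub_eq_mul_sub hf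
  choose a ha using hz'
  have hconst : ∀ z, ∃ b, ∀ θ, f z θ - a z * f z' θ = b := fun z =>
    exists_forall_eq_of_eqvGen hΘ fun p q hpq => by linear_combination -ha z p q hpq
  choose b hb using hconst
  exact ⟨z', a, b, fun z θ => by rw [← hb z θ, add_sub_cancel]⟩

end MonotoneSpan

lemma linCombMonPreserving_iff_forall_mem_span {Θ Z : Type*} [PartialOrder Θ] {f : Z → Θ → ℝ} :
    LinCombMonPreserving f ↔
      ∀ g ∈ Submodule.span ℝ (Set.range f), Monotone g ∨ Antitone g := by
  have hfinsum (c : Z →₀ ℝ) :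
      (fun θ => ∑ᶠ z, c z * f z θ) = Finsupp.linearCombination ℝ f c := by
    ext θ
    rw [finsum_eq_sum_of_support_subset (s := c.support) _ fun z hz =>
        Finsupp.mem_support_iff.mpr (left_ne_zero_of_mul hz)]
    simp only [Finsupp.linearCombination_apply, Finsupp.sum, Finset.sum_apply, Pi.smul_apply,
      smul_eq_mul]
  simp only [← Finsupp.range_linearCombination, LinearMap.mem_range, forall_exists_index,
    forall_apply_eq_imp_iff, ← hfinsum]
  exact ⟨fun hf c => hf c c.hasFiniteSupport, fun hf μ hμ => hf (Finsupp.ofSupportFinite μ hμ)⟩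

theorem linCombMonPreserving_iff_general {Θ Z : Type*} [PartialOrder Θ] [Nonempty Z]
    (hΘ : ∀ θ₁ θ₂ : Θ, Relation.EqvGen (· ≤ ·) θ₁ θ₂) (f : Z → Θ → ℝ) :
    LinCombMonPreserving f ↔
      ∃ (z' : Z) (lam₁ lam₂ : Z → ℝ),
        (Monotone (f z') ∨ Antitone (f z')) ∧
        (∀ (z : Z) (θ : Θ), f z θ = lam₁ z * f z' θ + lam₂ z) := by
  rw [linCombMonPreserving_iff_forall_mem_span]
  constructor
  · intro hf
    obtain ⟨z', lam₁, lam₂, haff⟩ := exists_forall_eq_mul_add hΘ hf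
    exact ⟨z', lam₁, lam₂, hf _ (Submodule.subset_span ⟨z', rfl⟩), haff⟩
  · rintro ⟨z', lam₁, lam₂, hmon, haff⟩ g hg
    have hspan : Submodule.span ℝ (Set.range f) ≤ Submodule.span ℝ {f z', 1} := by
      rw [Submodule.span_le, Set.range_subset_iff]
      refine fun z => Submodule.mem_span_pair.mpr ⟨lam₁ z, lam₂ z, ?_⟩
      ext θ
      simp [haff z θ]
    exact monotone_or_antitone_of_mem_span_pair_one hmon (hspan hg)

/-- `f` is linear combinations monotonicity-preserving iff it is
affinely generated by a single monotone function. -/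
theorem linCombMonPreserving_iff {Θ Z : Type*} [PartialOrder Θ] [Nonempty Z]
    (hub : ∀ θ₁ θ₂ : Θ, ∃ θ : Θ, θ₁ ≤ θ ∧ θ₂ ≤ θ)
    (hlb : ∀ θ₁ θ₂ : Θ, ∃ θ : Θ, θ ≤ θ₁ ∧ θ ≤ θ₂)
    (f : Z → Θ → ℝ) :
    LinCombMonPreserving f ↔
      ∃ (z' : Z) (lam₁ lam₂ : Z → ℝ),
        (Monotone (f z') ∨ Antitone (f z')) ∧
        (∀ (z : Z) (θ : Θ), f z θ = lam₁ z * f z' θ + lam₂ z) :=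
  linCombMonPreserving_iff_general (fun θ₁ θ₂ =>
    let ⟨_, h₁, h₂⟩ := hub θ₁ θ₂; eqvGen_le_of_le_of_le h₁ h₂) f
end

section
/- Let Θ be a partially ordered set in which every pair of elements has an upper bound and a lower bound in Θ, let (A, ⪰) be a partially ordered set, and let u : A × Θ → ℝ be such that A is minimal with respect to u (for all distinct a, a' ∈ A there is θ with u(a,θ) ≠ u(a',θ)). Then u has monotone comparative statics on (A, ⪰) if and only if u has single-crossing differences (SCD) and ⪰ is a refinement of ⪰_SCD. -/
/-- `S` dominates `S'` in the strong set order: for every `a ∈ S`, `a' ∈ S'`,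
the join and meet of `{a, a'}` exist, with the join in `S` and the meet in `S'`. -/
def StrongSetOrder {A : Type*} [PartialOrder A] (S S' : Set A) : Prop :=
  ∀ a ∈ S, ∀ a' ∈ S',
    (∃ j : A, IsLUB {a, a'} j ∧ j ∈ S) ∧ (∃ m : A, IsGLB {a, a'} m ∧ m ∈ S')

/-- `u` has monotone comparative statics on the ordered set `A`. -/
def MCS {A Θ : Type*} [PartialOrder A] [PartialOrder Θ] (u : A → Θ → ℝ) : Prop :=
  ∀ (S : Set A) (θl θh : Θ), θl ≤ θh →
    StrongSetOrder (choiceCorr u S θh) (choiceCorr u S θl)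

/-- `a ≻_SCD a'`: the difference is single crossing only from below. -/
def SCDgt {A Θ : Type*} [PartialOrder Θ] (u : A → Θ → ℝ) (a a' : A) : Prop :=
  Monotone (fun θ => Real.sign (u a θ - u a' θ)) ∧
  ¬ Antitone (fun θ => Real.sign (u a θ - u a' θ))

/-- `a ⪰_SCD a'`. -/
def SCDge {A Θ : Type*} [PartialOrder Θ] (u : A → Θ → ℝ) (a a' : A) : Prop :=
  SCDgt u a a' ∨ a = a'

/-!
Write `D = u a - u a'`. It is single crossing from below if and only if `D θl ≥ 0 ≥ D θh` with
`θl ≤ θh` forces `D` to vanish at both parameters. In terms of the menu `{a, a'}`: if `a` is chosen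
at `θl` and `a'` at `θh`, then `a` is also chosen at `θh` and `a'` at `θl`.

Under monotone comparative statics, the strong set order imposes exactly this swap whenever
`¬ a ≤ a'`, since the join of the pair must then be `a` and the meet `a'`. This yields SCD, and also
refinement: if `¬ a' ≤ a`, then `D` crosses from above, which `a ≻_SCD a'` excludes.

Conversely, let `a` be chosen at `θh` and `a'` at `θl ≤ θh`. Since neither action is strictly better
throughout, minimality and connectedness of `Θ` make `a` and `a'` comparable under `⪰_SCD`. If
`a ⪰_SCD a'`, then `a` is the join and `a'` the meet; if `a' ⪰_SCD a`, then the swap shows that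
both actions are chosen at both parameters.
-/

section Order

variable {α : Type*} [Preorder α] {a b : α}

lemma isLUB_pair_of_le (h : a ≤ b) : IsLUB {a, b} b :=
  IsGreatest.isLUB ⟨by simp, by simp [upperBounds, h]⟩

lemma isGLB_pair_of_le (h : a ≤ b) : IsGLB {a, b} a :=
  IsLeast.isGLB ⟨by simp, by simp [lowerBounds, h]⟩

lemma eqvGen_le_of_exists_upper_bound (h : ∃ c, a ≤ c ∧ b ≤ c) :
    Relation.EqvGen (· ≤ ·) a b :=
  let ⟨_, hac, hbc⟩ := h
  .trans _ _ _ (.rel _ _ hac) (.symm _ _ (.rel _ _ hbc))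

end Order

lemma strongSetOrder_of_le_or_swap {A : Type*} [PartialOrder A] {S S' : Set A}
    (h : ∀ a ∈ S, ∀ a' ∈ S', a' ≤ a ∨ a ≤ a' ∧ a' ∈ S ∧ a ∈ S') : StrongSetOrder S S' := by
  intro a ha a' ha'
  rcases h a ha a' ha' with hle | ⟨hle, ha'S, haS'⟩
  · rw [Set.pair_comm]
    exact ⟨⟨a, isLUB_pair_of_le hle, ha⟩, ⟨a', isGLB_pair_of_le hle, ha'⟩⟩
  · exact ⟨⟨a', isLUB_pair_of_le hle, ha'S⟩, ⟨a, isGLB_pair_of_le hle, haS'⟩⟩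

lemma StrongSetOrder.swap_of_subset_pair {A : Type*} [PartialOrder A] {S S' : Set A} {a a' : A}
    (h : StrongSetOrder S S') (hS : S ⊆ {a, a'}) (hS' : S' ⊆ {a, a'}) (hle : ¬ a ≤ a')
    (ha' : a' ∈ S) (ha : a ∈ S') : a ∈ S ∧ a' ∈ S' := by
  obtain ⟨⟨j, hj, hjS⟩, m, hm, hmS'⟩ := h a' ha' a ha
  constructor
  · rcases hS hjS with rfl | rfl
    · exact hjS
    · exact absurd (hj.1 (by simp)) hle
  · rcases hS' hmS' with rfl | rfl
    · exact absurd (hm.1 (by simp)) hle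
    · exact hmS'

lemma sign_le_sign_iff {x y : ℝ} :
    Real.sign x ≤ Real.sign y ↔ (0 ≤ x → y ≤ 0 → x = 0 ∧ y = 0) := by
  rcases lt_trichotomy x 0 with hx | rfl | hx <;> rcases lt_trichotomy y 0 with hy | rfl | hy <;>
    simp [Real.sign_of_neg, Real.sign_of_pos, *] <;> grind

section SingleCrossingFromBelow

variable {Θ : Type*} [Preorder Θ] {f : Θ → ℝ}

/-- `f` is single crossing from below: its sign is increasing. Single crossing from above is
expressed as `SingleCrossingFromBelow (-f)`. -/
def SingleCrossingFromBelow (f : Θ → ℝ) : Prop :=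
  Monotone fun θ => Real.sign (f θ)

lemma singleCrossingFromBelow_iff :
    SingleCrossingFromBelow f ↔
      ∀ θl θh, θl ≤ θh → 0 ≤ f θl → f θh ≤ 0 → f θl = 0 ∧ f θh = 0 :=
  forall₃_congr fun _ _ _ => sign_le_sign_iff

lemma singleCrossingFromBelow_zero : SingleCrossingFromBelow (0 : Θ → ℝ) :=
  fun _ _ _ => le_rfl

lemma singleCrossingFromBelow_neg_iff :
    SingleCrossingFromBelow (-f) ↔ Antitone fun θ => Real.sign (f θ) := by
  simp only [SingleCrossingFromBelow, Pi.neg_apply, Real.sign_neg, Monotone, Antitone,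
    neg_le_neg_iff]

lemma SingleCrossingFromBelow.eq_zero_of_neg
    (hconn : ∀ θ₁ θ₂ : Θ, Relation.EqvGen (· ≤ ·) θ₁ θ₂) (hf : SingleCrossingFromBelow f)
    (hneg : SingleCrossingFromBelow (-f)) {θ₁ θ₂ : Θ} (h₁ : f θ₁ ≤ 0) (h₂ : 0 ≤ f θ₂) :
    f = 0 := by
  have sign_eq (θ θ' : Θ) : Real.sign (f θ) = Real.sign (f θ') :=
    Setoid.eqvGen_le (s := Setoid.ker fun θ => Real.sign (f θ))
      (fun _ _ hle => (hf hle).antisymm (singleCrossingFromBelow_neg_iff.1 hneg hle)) (hconn θ θ')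
  have zero₁ : f θ₁ = 0 := (sign_le_sign_iff.1 (sign_eq θ₂ θ₁).le h₂ h₁).2
  funext θ
  exact Real.sign_eq_zero_iff.1 (by rw [sign_eq θ θ₁, zero₁, Real.sign_zero])

end SingleCrossingFromBelow

lemma mem_choiceCorr_of_le {A Θ : Type*} {u : A → Θ → ℝ} {S : Set A} {θ : Θ} {a b : A}
    (ha : a ∈ choiceCorr u S θ) (hb : b ∈ S) (hab : u a θ ≤ u b θ) : b ∈ choiceCorr u S θ :=
  ⟨hb, fun c hc => (ha.2 c hc).trans hab⟩

lemma SingleCrossingFromBelow.choiceCorr_swap {A Θ : Type*} [Preorder Θ] {u : A → Θ → ℝ}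
    {S : Set A} {θl θh : Θ} {a a' : A} (h : SingleCrossingFromBelow (u a - u a')) (hθ : θl ≤ θh)
    (ha : a ∈ choiceCorr u S θl) (ha' : a' ∈ choiceCorr u S θh) :
    a' ∈ choiceCorr u S θl ∧ a ∈ choiceCorr u S θh := by
  obtain ⟨hl, hh⟩ := singleCrossingFromBelow_iff.1 h θl θh hθ
    (sub_nonneg.2 (ha.2 a' ha'.1)) (sub_nonpos.2 (ha'.2 a ha.1))
  exact ⟨mem_choiceCorr_of_le ha ha'.1 (sub_eq_zero.1 hl).le,
    mem_choiceCorr_of_le ha' ha.1 (sub_eq_zero.1 hh).ge⟩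

section SCDOrder

variable {A Θ : Type*} [PartialOrder Θ] {u : A → Θ → ℝ} {a a' : A}

lemma antitone_sign_sub_iff :
    Antitone (fun θ => Real.sign (u a θ - u a' θ)) ↔ SingleCrossingFromBelow (u a' - u a) := by
  rw [← neg_sub (u a), singleCrossingFromBelow_neg_iff]
  rfl

lemma scd_iff :
    SCD u ↔ ∀ a a', SingleCrossingFromBelow (u a - u a') ∨ SingleCrossingFromBelow (u a' - u a) :=
  forall₂_congr fun _ _ => or_congr Iff.rfl antitone_sign_sub_iff

lemma scdgt_iff :
    SCDgt u a a' ↔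
      SingleCrossingFromBelow (u a - u a') ∧ ¬ SingleCrossingFromBelow (u a' - u a) :=
  and_congr Iff.rfl (not_congr antitone_sign_sub_iff)

lemma SCDge.singleCrossingFromBelow (h : SCDge u a a') : SingleCrossingFromBelow (u a - u a') := by
  rcases h with hgt | rfl
  · exact hgt.1
  · rw [sub_self]
    exact singleCrossingFromBelow_zero

lemma SCD.scdge_or_scdge (hscd : SCD u) (hconn : ∀ θ₁ θ₂ : Θ, Relation.EqvGen (· ≤ ·) θ₁ θ₂)
    (hminimal : MinimalActions u) {θ₁ θ₂ : Θ} (h₁ : u a θ₁ ≤ u a' θ₁) (h₂ : u a' θ₂ ≤ u a θ₂) :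
    SCDge u a a' ∨ SCDge u a' a := by
  by_cases hab : SingleCrossingFromBelow (u a - u a')
  · by_cases hba : SingleCrossingFromBelow (u a' - u a)
    · have hzero : u a - u a' = 0 := hab.eq_zero_of_neg hconn (by rwa [neg_sub])
        (sub_nonpos.2 h₁) (sub_nonneg.2 h₂)
      have heq : a = a' := by
        by_contra hne
        obtain ⟨θ, hθ⟩ := hminimal a a' hne
        exact hθ (congrFun (sub_eq_zero.1 hzero) θ)
      exact .inl (.inr heq)
    · exact .inl (.inl (scdgt_iff.2 ⟨hab, hba⟩))
  · exact .inr (.inl (scdgt_iff.2 ⟨(scd_iff.1 hscd a a').resolve_left hab, hab⟩))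

end SCDOrder

section MCS

variable {Θ A : Type*} [PartialOrder Θ] [PartialOrder A] {u : A → Θ → ℝ} {a a' : A}

lemma MCS.singleCrossingFromBelow_of_not_le (h : MCS u) (hle : ¬ a ≤ a') :
    SingleCrossingFromBelow (u a - u a') := by
  refine singleCrossingFromBelow_iff.2 fun θl θh hθ hl hh => ?_
  have ha : a ∈ choiceCorr u {a, a'} θl := by simpa [choiceCorr] using hl
  have ha' : a' ∈ choiceCorr u {a, a'} θh := by simpa [choiceCorr] using hh
  obtain ⟨hah, hal'⟩ := (h {a, a'} θl θh hθ).swap_of_subset_pair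
    (Set.sep_subset _ _) (Set.sep_subset _ _) hle ha' ha
  exact ⟨(sub_nonpos.2 (hal'.2 a ha.1)).antisymm hl, hh.antisymm (sub_nonneg.2 (hah.2 a' ha'.1))⟩

lemma MCS.scd (h : MCS u) : SCD u := by
  refine scd_iff.2 fun a a' => ?_
  by_cases hle : a ≤ a'
  · by_cases hge : a' ≤ a
    · exact .inl (SCDge.singleCrossingFromBelow (.inr (hle.antisymm hge)))
    · exact .inr (h.singleCrossingFromBelow_of_not_le hge)
  · exact .inl (h.singleCrossingFromBelow_of_not_le hle)

lemma MCS.le_of_scdge (h : MCS u) (hge : SCDge u a a') : a' ≤ a := by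
  rcases hge with hgt | rfl
  · by_contra hle
    exact (scdgt_iff.1 hgt).2 (h.singleCrossingFromBelow_of_not_le hle)
  · exact le_rfl

lemma SCD.mcs_of_refinement (hscd : SCD u)
    (hconn : ∀ θ₁ θ₂ : Θ, Relation.EqvGen (· ≤ ·) θ₁ θ₂) (hminimal : MinimalActions u)
    (href : ∀ a a' : A, SCDge u a a' → a' ≤ a) : MCS u := by
  refine fun S θl θh hθ => strongSetOrder_of_le_or_swap fun a ha a' ha' => ?_
  rcases hscd.scdge_or_scdge hconn hminimal (ha'.2 a ha.1) (ha.2 a' ha'.1) with hge | hge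
  · exact .inl (href a a' hge)
  · obtain ⟨hal, hah'⟩ := hge.singleCrossingFromBelow.choiceCorr_swap hθ ha' ha
    exact .inr ⟨href a' a hge, hah', hal⟩

end MCS

theorem mcs_iff_scd_and_refinement_general {Θ A : Type*} [PartialOrder Θ] [PartialOrder A]
    (hconn : ∀ θ₁ θ₂ : Θ, Relation.EqvGen (· ≤ ·) θ₁ θ₂)
    (u : A → Θ → ℝ) (hminimal : MinimalActions u) :
    MCS u ↔ (SCD u ∧ ∀ a a' : A, SCDge u a a' → a' ≤ a) :=
  ⟨fun h => ⟨h.scd, fun _ _ => h.le_of_scdge⟩,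
    fun ⟨hscd, href⟩ => hscd.mcs_of_refinement hconn hminimal href⟩

/-- With `A` minimal, `u` has MCS on `(A, ⪰)` iff `u` has SCD and
`⪰` refines `⪰_SCD`. -/
theorem mcs_iff_scd_and_refinement {Θ A : Type*} [PartialOrder Θ] [PartialOrder A]
    (hub : ∀ θ₁ θ₂ : Θ, ∃ θ : Θ, θ₁ ≤ θ ∧ θ₂ ≤ θ)
    (hlb : ∀ θ₁ θ₂ : Θ, ∃ θ : Θ, θ ≤ θ₁ ∧ θ ≤ θ₂)
    (u : A → Θ → ℝ) (hminimal : MinimalActions u) :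
    MCS u ↔ (SCD u ∧ ∀ a a' : A, SCDge u a a' → a' ≤ a) :=
  mcs_iff_scd_and_refinement_general (fun θ₁ θ₂ => eqvGen_le_of_exists_upper_bound (hub θ₁ θ₂))
    u hminimal
end

section
/- Let Θ be a partially ordered set in which every pair of elements has an upper bound and a lower bound in Θ, let (A, ⪰) be a partially ordered set, and let u : A × Θ → ℝ be such that A is minimal with respect to u (for all distinct a, a' ∈ A there is θ with u(a,θ) ≠ u(a',θ)). Then u has monotone selection on (A, ⪰) — i.e., for every S ⊆ A, all θ_l < θ_h in Θ, every a_l ∈ C_u(S, θ_l) and every a_h ∈ C_u(S, θ_h), one has a_h ⪰ a_l (equivalently, every selection from θ ↦ C_u(S, θ) is increasing) — if and only if u has strict single-crossing differences (SSCD) and ⪰ is a refinement of ⪰_SSCD. -/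
/-- `u` has monotone selection on the ordered set `A`. -/
def MonotoneSelection {A Θ : Type*} [PartialOrder A] [PartialOrder Θ]
    (u : A → Θ → ℝ) : Prop :=
  ∀ (S : Set A) (θl θh : Θ), θl < θh →
    ∀ al ∈ choiceCorr u S θl, ∀ ah ∈ choiceCorr u S θh, al ≤ ah

/-- `a ≻_SSCD a'`: the difference is strictly single crossing, single crossing
from below, and not single crossing from above. -/
def SSCDgt {A Θ : Type*} [PartialOrder Θ] (u : A → Θ → ℝ) (a a' : A) : Prop :=
  StrictSingleCrossing (fun θ => u a θ - u a' θ) ∧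
  Monotone (fun θ => Real.sign (u a θ - u a' θ)) ∧
  ¬ Antitone (fun θ => Real.sign (u a θ - u a' θ))

/-- `a ⪰_SSCD a'`. -/
def SSCDge {A Θ : Type*} [PartialOrder Θ] (u : A → Θ → ℝ) (a a' : A) : Prop :=
  SSCDgt u a a' ∨ a = a'

/-!
Everything is decided by two-element menus. An action `a` is chosen from `{a, b}` at `θl` and `b`
is chosen at some `θh > θl` exactly when `u a - u b` is nonnegative at `θl` and nonpositive at
`θh`. So monotone selection says that `u a - u b` crosses zero strictly from below whenever
`a ≤ b` fails. Writing `R a b` for this crossing property, SSCD says that `R` relates any two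
distinct actions in at least one direction, and `a ≻_SSCD b` says `R a b ∧ ¬ R b a`. What is left
is propositional logic and the antisymmetry of `≤`.
-/

/-- Strict single crossing from below: above any point where it is nonnegative, `f` is positive.
This pointwise form says in one condition that `sgn ∘ f` is increasing and that `f` has no two
ordered zeros. Strict single crossing of `f` from above is encoded as the same property of `-f`. -/
def StrictSingleCrossingFromBelow {Θ : Type*} [PartialOrder Θ] (f : Θ → ℝ) : Prop :=
  ∀ ⦃θl θh : Θ⦄, θl < θh → 0 ≤ f θl → 0 < f θh

theorem real_sign_le_sign_iff {x y : ℝ} :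
    Real.sign x ≤ Real.sign y ↔ (0 < x → 0 < y) ∧ (0 ≤ x → 0 ≤ y) := by
  rcases lt_trichotomy x 0 with hx | rfl | hx <;> rcases lt_trichotomy y 0 with hy | rfl | hy <;>
    simp [Real.sign_of_neg, Real.sign_of_pos, *, le_of_lt, not_lt_of_gt, not_le_of_gt]

section Crossing

variable {Θ : Type*} [PartialOrder Θ] {f : Θ → ℝ}

theorem strictSingleCrossingFromBelow_iff_monotone_sign :
    StrictSingleCrossingFromBelow f ↔
      Monotone (fun θ => Real.sign (f θ)) ∧ ∀ θ' θ'' : Θ, θ' < θ'' → ¬(f θ' = 0 ∧ f θ'' = 0) := by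
  constructor
  · intro hf
    refine ⟨monotone_iff_forall_lt.2 fun θl θh hlt => ?_, fun θl θh hlt h => ?_⟩
    · exact real_sign_le_sign_iff.2 ⟨fun hl => hf hlt hl.le, fun hl => (hf hlt hl).le⟩
    · exact (hf hlt h.1.ge).ne' h.2
  · rintro ⟨hmono, hzeros⟩ θl θh hlt hl
    obtain ⟨hpos, hnonneg⟩ := real_sign_le_sign_iff.1 (hmono hlt.le)
    rcases hl.eq_or_lt' with hzero | hl
    · exact (hnonneg hl).lt_of_ne' fun hh => hzeros θl θh hlt ⟨hzero, hh⟩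
    · exact hpos hl

theorem strictSingleCrossingFromBelow_neg_iff_antitone_sign :
    StrictSingleCrossingFromBelow (-f) ↔
      Antitone (fun θ => Real.sign (f θ)) ∧ ∀ θ' θ'' : Θ, θ' < θ'' → ¬(f θ' = 0 ∧ f θ'' = 0) := by
  simp only [strictSingleCrossingFromBelow_iff_monotone_sign, Pi.neg_apply, Real.sign_neg,
    neg_eq_zero, Monotone, Antitone, neg_le_neg_iff]

theorem strictSingleCrossing_iff_fromBelow_or_neg :
    StrictSingleCrossing f ↔
      StrictSingleCrossingFromBelow f ∨ StrictSingleCrossingFromBelow (-f) := by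
  rw [strictSingleCrossingFromBelow_iff_monotone_sign,
    strictSingleCrossingFromBelow_neg_iff_antitone_sign, ← or_and_right]
  rfl

end Crossing

section Differences

variable {A Θ : Type*} [PartialOrder Θ] {u : A → Θ → ℝ}

theorem sscd_iff_fromBelow_or_fromBelow :
    SSCD u ↔ ∀ a b : A, a ≠ b →
      StrictSingleCrossingFromBelow (u a - u b) ∨ StrictSingleCrossingFromBelow (u b - u a) := by
  refine forall₃_congr fun a b _ => ?_
  rw [← neg_sub (u a) (u b)]
  exact strictSingleCrossing_iff_fromBelow_or_neg

theorem sscdgt_iff_fromBelow_and_not_fromBelow {a b : A} :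
    SSCDgt u a b ↔
      StrictSingleCrossingFromBelow (u a - u b) ∧ ¬ StrictSingleCrossingFromBelow (u b - u a) := by
  rw [← neg_sub (u a) (u b), strictSingleCrossingFromBelow_iff_monotone_sign,
    strictSingleCrossingFromBelow_neg_iff_antitone_sign]
  simp only [SSCDgt, StrictSingleCrossing, SingleCrossing, Pi.sub_apply]
  tauto

end Differences

theorem mem_choiceCorr_pair_left {A Θ : Type*} {u : A → Θ → ℝ} {a b : A} {θ : Θ} :
    a ∈ choiceCorr u {a, b} θ ↔ u b θ ≤ u a θ := by
  simp [choiceCorr]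

theorem mem_choiceCorr_pair_right {A Θ : Type*} {u : A → Θ → ℝ} {a b : A} {θ : Θ} :
    b ∈ choiceCorr u {a, b} θ ↔ u a θ ≤ u b θ := by
  rw [Set.pair_comm, mem_choiceCorr_pair_left]

theorem monotoneSelection_iff_fromBelow_of_not_le {A Θ : Type*} [PartialOrder A] [PartialOrder Θ]
    {u : A → Θ → ℝ} :
    MonotoneSelection u ↔ ∀ a b : A, ¬ a ≤ b → StrictSingleCrossingFromBelow (u a - u b) := by
  constructor
  · intro hmono a b hab θl θh hlt hl
    contrapose! hab with hh
    exact hmono {a, b} θl θh hlt a (mem_choiceCorr_pair_left.2 (sub_nonneg.1 hl))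
      b (mem_choiceCorr_pair_right.2 (sub_nonpos.1 hh))
  · rintro hcross S θl θh hlt a ⟨haS, ha⟩ b ⟨hbS, hb⟩
    by_contra hab
    exact (hcross a b hab hlt (sub_nonneg.2 (ha b hbS))).not_ge (sub_nonpos.2 (hb a haS))

theorem monotoneSelection_iff_sscd_and_refinement_general {Θ A : Type*}
    [PartialOrder Θ] [PartialOrder A] (u : A → Θ → ℝ) :
    MonotoneSelection u ↔ (SSCD u ∧ ∀ a a' : A, SSCDge u a a' → a' ≤ a) := by
  simp only [monotoneSelection_iff_fromBelow_of_not_le, sscd_iff_fromBelow_or_fromBelow, SSCDge,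
    sscdgt_iff_fromBelow_and_not_fromBelow]
  constructor
  · intro hcross
    refine ⟨fun a b hne => ?_, ?_⟩
    · exact (not_and_or.1 fun h => hne (le_antisymm h.1 h.2)).imp (hcross a b) (hcross b a)
    · rintro a b (⟨-, hnot⟩ | rfl)
      · exact not_imp_comm.1 (hcross b a) hnot
      · exact le_rfl
  · rintro ⟨hsscd, hrefine⟩ a b hab
    by_contra hnot
    have hba := (hsscd a b (ne_of_not_le hab)).resolve_left hnot
    exact hab (hrefine b a (Or.inl ⟨hba, hnot⟩))

/-- With `A` minimal, `u` has monotone selection on `(A, ⪰)` iff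
`u` has SSCD and `⪰` refines `⪰_SSCD`. -/
theorem monotoneSelection_iff_sscd_and_refinement {Θ A : Type*}
    [PartialOrder Θ] [PartialOrder A]
    (hub : ∀ θ₁ θ₂ : Θ, ∃ θ : Θ, θ₁ ≤ θ ∧ θ₂ ≤ θ)
    (hlb : ∀ θ₁ θ₂ : Θ, ∃ θ : Θ, θ ≤ θ₁ ∧ θ ≤ θ₂)
    (u : A → Θ → ℝ) (hminimal : MinimalActions u) :
    MonotoneSelection u ↔ (SSCD u ∧ ∀ a a' : A, SSCDge u a a' → a' ≤ a) :=
  monotoneSelection_iff_sscd_and_refinement_general u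
end
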